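/- arXiv:2408.10127 — 2 statements merged into one kernel-verified Lean document; each statement's English description precedes it below -/
import Mathlib

section
/- There exist absolute constants C > 0, c > 0 and n₀ > 0 such that the following holds. Let n > n₀, let r > Cn, and let G = Aₙ. Then for every positive integer i and all subsets A₁, ..., Aᵢ ⊆ G each of size at least e^r, there exist σ₁, ..., σᵢ ∈ G with |A₁^{σ₁} ⋯ Aᵢ^{σᵢ}| ≥ min(|A₁|^c ⋯ |Aᵢ|^c, e^{c·√(n·(log n)·r)}). -/
open scoped Pointwise

/-- The conjugate `A^σ = {σ⁻¹ a σ : a ∈ A}` of a finite subset of a group. -/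
def conjFinset {G : Type*} [Group G] [DecidableEq G] (A : Finset G) (σ : G) : Finset G :=
  A.image fun a => σ⁻¹ * a * σ

/-!
Put `q = √(n · log n · r)`, where `|B| = e^r` and `r ≥ 100 n`; since `|Aₙ| ≤ nⁿ`, one has
`r ≤ q ≤ n log n`. The theorem follows by multiplying the sets one at a time from the growth step
`exists_conj_growth`: if `X` is nonempty with `|X| ≤ e^{q/32}`, then some conjugate of `B` satisfies
`|X B^σ| ≥ |X| |B|^{1/32}`.

For the growth step, let `m = q / (4 log n)` and choose a maximal subset `B'` of `B` whose elements
have pairwise quotients of support larger than `m` (`exists_separated`). Since the sets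
`{b ∈ B : |supp (b b₀⁻¹)| ≤ m}` with `b₀ ∈ B'` cover `B`, either `|B'| ≥ |B|^{1/2}` or one of these
balls has at least `|B|^{1/2}` elements.

If `B'` is large, the quotients `b b'⁻¹` have conjugacy classes of size at least
`κ = n^{m/2} = e^{q/8}`, up to a factor `e^{O(n)}` (`card_conjugators_sq_le`). Averaging the
multiplicative energy of `X` and `B'^σ` over `σ` (`exists_mulEnergy_conj_le`) gives some `σ` for
which `|X B'^σ|` is at least half of the smaller of `|X| |B'|` and `κ`, and both exceed
`|X| |B|^{1/32}`, which is at most `e^{q/16}` (`growth_of_separated`).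

If a ball is large, then after a right translation (harmless, as it only translates the product) and
a loss of a factor `2ⁿ`, all its elements are supported on one set `M` with `|M| ≤ m`. Then `X B^σ`
has at least `|B|` elements for each restriction of an element of `X` to the complement of `σ⁻¹ M`.
Take about `n / |M|` disjoint blocks of size `|M|`; by a weak form of the
Loomis–Whitney inequality (`card_le_mul_sum_forgetBlock`) forgetting the values on some
block loses at most a factor of order `n |X|^{2 |M| / n} ≤ n e^{r/64}`, because
`q · m / n` is `r / 4` (`growth_of_near`).
-/

open Equiv

/-! ### Sizes of conjugacy classes in terms of supports -/

/-- A permutation `τ` with `τ u = v τ` satisfies `τ x = v (τ (u⁻¹ x))`, so it is determined,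
by induction on `x`, by its values at the points with `x ≤ u⁻¹ x`. -/
theorem card_le_of_twist {n : ℕ} (u v : Perm (Fin n)) (S : Finset (Perm (Fin n)))
    (hS : ∀ τ ∈ S, τ * u = v * τ) :
    S.card * n ^ (Finset.univ.filter fun x => u⁻¹ x < x).card ≤ n ^ n := by
  have hinj : Set.InjOn
      (fun (τ : Perm (Fin n)) (x : {x : Fin n // ¬ u⁻¹ x < x}) => τ x) S := by
    intro τ hτ τ' hτ' h
    have key : ∀ x : Fin n, τ x = τ' x := by
      intro x
      induction x using WellFoundedLT.induction with
      | ind x ih =>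
        by_cases hx : u⁻¹ x < x
        · have h1 := congrArg (fun f : Perm (Fin n) => f (u⁻¹ x)) (hS τ hτ)
          have h2 := congrArg (fun f : Perm (Fin n) => f (u⁻¹ x)) (hS τ' hτ')
          rw [Perm.mul_apply, Perm.mul_apply] at h1 h2
          simp only [← Perm.mul_apply, mul_inv_cancel, Perm.one_apply] at h1 h2
          simp only [h1, h2, Perm.mul_apply, ih _ hx]
        · exact congrFun h ⟨x, hx⟩
    exact Perm.ext key
  have h1 := Finset.card_le_card_of_injOn (t := Finset.univ) _ (fun _ _ => Finset.mem_univ _) hinj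
  rw [Finset.card_univ, Fintype.card_fun, Fintype.card_fin, Fintype.card_subtype] at h1
  have h2 := Finset.card_filter_add_card_filter_not (s := (Finset.univ : Finset (Fin n)))
    (fun x => u⁻¹ x < x)
  rw [Finset.card_univ, Fintype.card_fin] at h2
  calc _ ≤ n ^ _ * n ^ _ := Nat.mul_le_mul_right _ h1
    _ = n ^ n := by rw [← pow_add]; congr 1; omega

/-- The number of `σ` conjugating `u` to `v` is at most `n ^ (n - |supp u| / 2)`, stated without
division: `card_le_of_twist` applies both to `u` and to `u⁻¹`, and the sizes of the two sets of
points whose values are redundant add up to the size of the support of `u`. -/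
theorem card_conjugators_sq_le {n : ℕ} (u v : alternatingGroup (Fin n))
    (S : Finset (alternatingGroup (Fin n))) (hS : ∀ σ ∈ S, σ⁻¹ * u * σ = v) :
    S.card ^ 2 * n ^ u.1.support.card ≤ n ^ (2 * n) := by
  classical
  set w : Perm (Fin n) := u.1
  set T : Finset (Perm (Fin n)) := S.image fun σ => (σ⁻¹).1
  have hT : T.card = S.card := Finset.card_image_of_injective _ fun a b h => by
    simpa using h
  have hT1 : ∀ τ ∈ T, τ * w = v.1 * τ := by
    intro τ hτ
    obtain ⟨σ, hσ, rfl⟩ := Finset.mem_image.1 hτ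
    rw [← hS σ hσ]; simp [w]
  have hT2 : ∀ τ ∈ T, τ * w⁻¹ = v.1⁻¹ * τ := by
    intro τ hτ
    have := hT1 τ hτ
    rw [mul_inv_eq_iff_eq_mul, mul_assoc, this, inv_mul_cancel_left]
  have h1 := card_le_of_twist w _ T hT1
  have h2 := card_le_of_twist w⁻¹ _ T hT2
  have hs : w.support.card = (Finset.univ.filter fun x => w⁻¹ x < x).card
      + (Finset.univ.filter fun x => (w⁻¹)⁻¹ x < x).card := by
    have e1 : (Finset.univ.filter fun x => w⁻¹ x < x).card
        = (Finset.univ.filter fun x => x < w x).card := by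
      symm
      refine Finset.card_bij (fun x _ => w x) ?_ ?_ ?_
      · intro x hx; simpa using hx
      · intro a _ b _ h; exact w.injective h
      · intro b hb; exact ⟨w⁻¹ b, by simpa using hb, by simp⟩
    rw [e1, inv_inv, ← Finset.card_union_of_disjoint]
    · congr 1
      ext x
      simp only [Perm.mem_support, Finset.mem_union, Finset.mem_filter, Finset.mem_univ, true_and]
      rw [ne_iff_lt_or_gt, or_comm]
    · rw [Finset.disjoint_filter]
      intro x _ h; exact h.not_gt
  rw [hs, pow_add, ← hT, two_mul, pow_add n n]
  calc _ = (T.card * n ^ (Finset.univ.filter fun x => w⁻¹ x < x).card) *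
      (T.card * n ^ (Finset.univ.filter fun x => (w⁻¹)⁻¹ x < x).card) := by ring
    _ ≤ _ := Nat.mul_le_mul h1 h2

/-! ### A weak Loomis–Whitney inequality -/

/-- The restriction of `x : ι → β` to the complement of the block `{i | l i = j}` of the partition
of `ι` given by the labelling `l`. -/
def forgetBlock {ι β : Type*} (l : ι → ℕ) (j : ℕ) (x : ι → β) : {i // l i ≠ j} → β :=
  fun i => x i

/-- If every fiber of `forgetBlock l j` on `X` has at least `D` elements, for each `j < k`, then the
blocks can be varied one after another, and `X` has at least `D ^ k` elements. The statement counts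
the elements of `X` obtained from `x` by varying the first `a` blocks only. -/
theorem pow_le_card_of_fibers {ι β : Type*} [Fintype ι] [DecidableEq β] [DecidableEq (ι → β)]
    (l : ι → ℕ) (D k : ℕ) (X : Finset (ι → β))
    (h : ∀ j < k, ∀ x ∈ X, D ≤ (X.filter fun y => forgetBlock l j y = forgetBlock l j x).card) :
    ∀ a ≤ k, ∀ x ∈ X, D ^ a ≤ (X.filter fun y => ∀ i, a ≤ l i → y i = x i).card := by
  intro a
  induction a with
  | zero =>
    intro _ x hx
    rw [pow_zero]
    exact Finset.card_pos.2 ⟨x, by simp [hx]⟩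
  | succ a ih =>
    intro ha x hx
    set F := X.filter fun y => forgetBlock l a y = forgetBlock l a x
    have hF : D ≤ F.card := h a ha x hx
    have hagree : ∀ z ∈ F, ∀ i, l i ≠ a → z i = x i := fun z hz i hi =>
      congrFun (Finset.mem_filter.1 hz).2 ⟨i, hi⟩
    have hsub : (F.biUnion fun z => X.filter fun y => ∀ i, a ≤ l i → y i = z i) ⊆
        X.filter fun y => ∀ i, a + 1 ≤ l i → y i = x i := by
      intro y hy
      obtain ⟨z, hz, hy⟩ := Finset.mem_biUnion.1 hy
      rw [Finset.mem_filter] at hy ⊢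
      exact ⟨hy.1, fun i hi => (hy.2 i (by omega)).trans (hagree z hz i (by omega))⟩
    refine le_trans ?_ (Finset.card_le_card hsub)
    rw [Finset.card_biUnion]
    · calc D ^ (a + 1) = D * D ^ a := by ring
        _ ≤ F.card * D ^ a := Nat.mul_le_mul_right _ hF
        _ = ∑ _z ∈ F, D ^ a := by simp
        _ ≤ _ := Finset.sum_le_sum fun z hz =>
          ih (by omega) z (Finset.mem_filter.1 hz).1
    · intro z hz z' hz' hne
      refine Finset.disjoint_left.2 ?_
      intro y hy hy'
      apply hne
      rw [Finset.mem_filter] at hy hy'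
      funext i
      by_cases hi : l i = a
      · rw [← hy.2 i hi.ge, ← hy'.2 i hi.ge]
      · rw [hagree z hz i hi, hagree z' hz' i hi]

/-- A substitute for the Loomis–Whitney inequality `|X| ^ (k - 1) ≤ ∏ |π_j X|`. By
`pow_le_card_of_fibers`, a nonempty `X` with fewer than `D ^ k` elements has a fiber with fewer than
`D` elements; deleting it removes an element of one of the projections. Repeat until `X` is
empty. -/
theorem card_le_mul_sum_forgetBlock {ι β : Type*} [Fintype ι] [DecidableEq β] [DecidableEq (ι → β)]
    (l : ι → ℕ) (D k : ℕ) (X : Finset (ι → β)) (hX : X.card < D ^ k) :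
    X.card ≤ D * ∑ j ∈ Finset.range k, (X.image (forgetBlock l j)).card := by
  induction X using Finset.strongInduction with
  | H X ih =>
    rcases X.eq_empty_or_nonempty with rfl | ⟨x₀, hx₀⟩
    · simp
    obtain ⟨j, hj, x, hx, hlt⟩ : ∃ j < k, ∃ x ∈ X,
        (X.filter fun y => forgetBlock l j y = forgetBlock l j x).card < D := by
      by_contra! hcon
      have h1 := pow_le_card_of_fibers l D k X hcon k le_rfl x₀ hx₀
      exact absurd (h1.trans (Finset.card_filter_le _ _)) (not_le.2 hX)
    set Y := X.filter fun y => ¬ forgetBlock l j y = forgetBlock l j x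
    have hYX : Y ⊂ X := Finset.filter_ssubset.2 ⟨x, hx, by simp⟩
    have hcard := Finset.card_filter_add_card_filter_not (s := X)
      (fun y => forgetBlock l j y = forgetBlock l j x)
    have hY := ih Y hYX ((Finset.card_lt_card hYX).trans hX)
    have hsum : ∑ j ∈ Finset.range k, (Y.image (forgetBlock l j)).card + 1 ≤
        ∑ j ∈ Finset.range k, (X.image (forgetBlock l j)).card := by
      refine Nat.succ_le_of_lt (Finset.sum_lt_sum ?_ ?_)
      · intro i _
        exact Finset.card_le_card (Finset.image_subset_image hYX.subset)
      · refine ⟨j, Finset.mem_range.2 hj, Finset.card_lt_card ?_⟩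
        rw [Finset.ssubset_iff_of_subset (Finset.image_subset_image hYX.subset)]
        refine ⟨_, Finset.mem_image_of_mem _ hx, ?_⟩
        simp [Y]
    calc X.card ≤ D + Y.card := by
          rw [← hcard]; exact Nat.add_le_add_right hlt.le _
      _ ≤ D + D * ∑ j ∈ Finset.range k, (Y.image (forgetBlock l j)).card :=
        Nat.add_le_add_left hY D
      _ = D * (∑ j ∈ Finset.range k, (Y.image (forgetBlock l j)).card + 1) := by ring
      _ ≤ D * ∑ j ∈ Finset.range k, (X.image (forgetBlock l j)).card :=
        Nat.mul_le_mul_left _ hsum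

/-! ### Averaging the multiplicative energy over conjugates -/

theorem card_conjFinset {G : Type*} [Group G] [DecidableEq G] (A : Finset G) (σ : G) :
    (conjFinset A σ).card = A.card :=
  Finset.card_image_of_injective _ fun a b h => by simpa using h

/-- If each `b * b'⁻¹` with `b ≠ b'` in `B` is conjugated to any given element by at most `Z`
elements of `G`, then the energy of `X` and a suitable conjugate of `B` is at most the diagonal
contribution `|X| |B|` plus `|X|² |B|² Z / |G|`. -/
theorem exists_mulEnergy_conj_le {G : Type*} [Group G] [Fintype G] [DecidableEq G]
    (X B : Finset G) (Z : ℝ) (hZ : 0 ≤ Z)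
    (h : ∀ b ∈ B, ∀ b' ∈ B, b ≠ b' → ∀ v,
      ((Finset.univ.filter fun σ : G => σ⁻¹ * (b * b'⁻¹) * σ = v).card : ℝ) ≤ Z) :
    ∃ σ : G, (Fintype.card G : ℝ) * (Finset.mulEnergy X (conjFinset B σ) : ℝ) ≤
      X.card * B.card * Fintype.card G + (X.card : ℝ) ^ 2 * (B.card : ℝ) ^ 2 * Z := by
  set P := (X ×ˢ X) ×ˢ B ×ˢ B
  let R : G → ((G × G) × G × G) → Prop := fun σ p =>
    p.1.1 * (σ⁻¹ * p.2.1 * σ) = p.1.2 * (σ⁻¹ * p.2.2 * σ)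
  have hE : ∀ σ : G, Finset.mulEnergy X (conjFinset B σ) ≤ (P.filter (R σ)).card := by
    intro σ
    have hsub : (((X ×ˢ X) ×ˢ conjFinset B σ ×ˢ conjFinset B σ).filter
        fun x : (G × G) × G × G => x.1.1 * x.2.1 = x.1.2 * x.2.2) ⊆
        (P.filter (R σ)).image fun p => (p.1, (σ⁻¹ * p.2.1 * σ, σ⁻¹ * p.2.2 * σ)) := by
      rintro ⟨⟨x, x'⟩, y, y'⟩ hp
      simp only [conjFinset, Finset.mem_filter, Finset.mem_product, Finset.mem_image] at hp
      obtain ⟨⟨⟨hx, hx'⟩, ⟨b, hb, rfl⟩, ⟨b', hb', rfl⟩⟩, he⟩ := hp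
      exact Finset.mem_image.2 ⟨((x, x'), b, b'), by simp [P, R, hx, hx', hb, hb', he], rfl⟩
    exact (Finset.card_le_card hsub).trans Finset.card_image_le
  -- for `b = b'` the products coincide only when `x = x'`, and then they do for every `σ`;
  -- for `b ≠ b'` the hypothesis on `B` bounds the number of `σ` by `Z`
  have hP : ∀ p ∈ P, ((Finset.univ.filter fun σ => R σ p).card : ℝ) ≤
      (if p.1.1 = p.1.2 then if p.2.1 = p.2.2 then (Fintype.card G : ℝ) else 0 else 0) + Z := by
    rintro ⟨⟨x, x'⟩, b, b'⟩ hp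
    simp only [P, Finset.mem_product] at hp
    by_cases hb : b = b'
    · subst hb
      by_cases hx : x = x'
      · subst hx
        simp [R, hZ]
      · simp [R, hx, hZ]
    · have h1 := h b hp.2.1 b' hp.2.2 hb (x⁻¹ * x')
      refine (le_trans ?_ h1).trans (by simp [hb])
      rw [Nat.cast_le]
      refine Finset.card_le_card fun σ hσ => ?_
      simp only [R, Finset.mem_filter, Finset.mem_univ, true_and] at hσ ⊢
      rw [eq_inv_mul_iff_mul_eq]
      calc x * (σ⁻¹ * (b * b'⁻¹) * σ) = (x * (σ⁻¹ * b * σ)) * (σ⁻¹ * b' * σ)⁻¹ := by group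
        _ = x' := by rw [hσ]; group
  have hsum : ∑ σ : G, (Fintype.card G : ℝ) * (Finset.mulEnergy X (conjFinset B σ) : ℝ) ≤
      ∑ _σ : G, (X.card * B.card * Fintype.card G + (X.card : ℝ) ^ 2 * (B.card : ℝ) ^ 2 * Z) := by
    rw [← Finset.mul_sum, Finset.sum_const, Finset.card_univ, nsmul_eq_mul]
    refine mul_le_mul_of_nonneg_left ?_ (Nat.cast_nonneg _)
    calc ∑ σ : G, (Finset.mulEnergy X (conjFinset B σ) : ℝ)
        ≤ ∑ σ : G, ((P.filter (R σ)).card : ℝ) :=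
          Finset.sum_le_sum fun σ _ => Nat.cast_le.2 (hE σ)
      _ = ∑ p ∈ P, ((Finset.univ.filter fun σ => R σ p).card : ℝ) := by
          simp only [Finset.card_filter, Nat.cast_sum]
          exact Finset.sum_comm
      _ ≤ ∑ p ∈ P, ((if p.1.1 = p.1.2 then if p.2.1 = p.2.2 then (Fintype.card G : ℝ) else 0
            else 0) + Z) := Finset.sum_le_sum hP
      _ = _ := by
          rw [Finset.sum_add_distrib, Finset.sum_const, Finset.sum_product, Finset.sum_product]
          simp only [Finset.sum_product, P, Finset.card_product]
          simp [Finset.sum_ite_eq, Finset.sum_ite_irrel]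
          ring
  obtain ⟨σ, -, hσ⟩ := Finset.exists_le_of_sum_le Finset.univ_nonempty hsum
  exact ⟨σ, hσ⟩

/-! ### Products with conjugates of a set supported on few points -/

/-- Any two sets of points of the same size, at most `n - 2`, are conjugate under `Aₙ`: an odd
permutation is corrected by a transposition of two points outside `M`. -/
theorem exists_even_perm_map {n : ℕ} (M : Finset (Fin n)) (hM : M.card + 2 ≤ n)
    (q : Fin n → Prop) [DecidablePred q] (hq : Fintype.card {i // q i} = M.card) :
    ∃ σ : alternatingGroup (Fin n), ∀ i, σ.1 i ∈ M ↔ q i := by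
  have e : {i // q i} ≃ {i // i ∈ M} := Fintype.equivOfCardEq (by rw [hq, Fintype.card_coe])
  set τ : Perm (Fin n) := e.extendSubtype
  have hτ : ∀ i, τ i ∈ M ↔ q i := fun i =>
    ⟨fun h => by_contra fun hi => e.extendSubtype_not_mem i hi h, fun h => e.extendSubtype_mem i h⟩
  rcases Int.units_eq_one_or (Perm.sign τ) with h | h
  · exact ⟨⟨τ, Perm.mem_alternatingGroup.2 h⟩, hτ⟩
  · have hc : 1 < Mᶜ.card := by
      rw [Finset.card_compl, Fintype.card_fin]; omega
    obtain ⟨a, ha, b, hb, hab⟩ := Finset.one_lt_card.1 hc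
    rw [Finset.mem_compl] at ha hb
    refine ⟨⟨swap a b * τ, Perm.mem_alternatingGroup.2 ?_⟩, fun i => ?_⟩
    · rw [map_mul, h, Perm.sign_swap hab]; rfl
    · rw [← hτ i]
      change swap a b (τ i) ∈ M ↔ τ i ∈ M
      rw [swap_apply_def]
      split_ifs with h1 h2
      · simp [h1, ha, hb]
      · simp [h2, ha, hb]
      · rfl

theorem card_block {n s j : ℕ} (hs : 0 < s) (hj : (j + 1) * s ≤ n) :
    Fintype.card {i : Fin n // (i : ℕ) / s = j} = s := by
  have e : {i : Fin n // (i : ℕ) / s = j} ≃ Fin s :=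
    { toFun := fun i => ⟨(i.1 : ℕ) % s, Nat.mod_lt _ hs⟩
      invFun := fun a => ⟨⟨s * j + a, by have := a.2; nlinarith⟩, by
        simp [Nat.mul_add_div hs, Nat.div_eq_of_lt a.2]⟩
      left_inv := by
        rintro ⟨i, rfl⟩
        ext
        exact Nat.div_add_mod _ _
      right_inv := by
        intro a
        ext
        simp [Nat.mod_eq_of_lt a.2] }
  rw [Fintype.card_congr e, Fintype.card_fin]

/-- Let `B` act trivially outside `M`, and let `σ` map the `j`-th block to `M`. Then `x * b^σ` agrees
with `x` outside the `j`-th block, so distinct restrictions of elements of `X` lie in distinct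
cosets, each of which contributes `|B|` products. -/
theorem card_forgetBlock_mul_le {n : ℕ} (X B : Finset (alternatingGroup (Fin n)))
    (M : Finset (Fin n)) (hB : ∀ b ∈ B, ∀ i ∉ M, b.1 i = i) (l : Fin n → ℕ) (j : ℕ)
    (σ : alternatingGroup (Fin n)) (hσ : ∀ i, σ.1 i ∈ M ↔ l i = j) :
    ((X.image fun x => (x.1 : Fin n → Fin n)).image (forgetBlock l j)).card * B.card ≤
      (X * conjFinset B σ).card := by
  set Y := (X.image fun x => (x.1 : Fin n → Fin n)).image (forgetBlock l j)
  have hY : ∀ y ∈ Y, ∃ x ∈ X, forgetBlock l j (x.1 : Fin n → Fin n) = y := by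
    intro y hy
    obtain ⟨f, hf, rfl⟩ := Finset.mem_image.1 hy
    obtain ⟨x, hx, rfl⟩ := Finset.mem_image.1 hf
    exact ⟨x, hx, rfl⟩
  choose! g hgX hg using hY
  have hfix : ∀ b ∈ B, ∀ y ∈ Y,
      forgetBlock l j ((g y * (σ⁻¹ * b * σ)).1 : Fin n → Fin n) = y := by
    intro b hb y hy
    refine Eq.trans ?_ (hg y hy)
    funext i
    have hi : σ.1 i.1 ∉ M := fun h => i.2 ((hσ _).1 h)
    change (g y).1 (σ.1⁻¹ (b.1 (σ.1 i.1))) = (g y).1 i.1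
    rw [hB b hb _ hi]
    exact congrArg (g y).1 (σ.1.symm_apply_apply i.1)
  rw [← Finset.card_product]
  refine Finset.card_le_card_of_injOn (fun p => g p.1 * (σ⁻¹ * p.2 * σ)) ?_ ?_
  · rintro ⟨y, b⟩ hp
    obtain ⟨hy, hb⟩ := Finset.mem_product.1 hp
    exact Finset.mul_mem_mul (hgX y hy) (Finset.mem_image_of_mem _ hb)
  · rintro ⟨y, b⟩ hp ⟨y', b'⟩ hp' h
    obtain ⟨hy, hb⟩ := Finset.mem_product.1 hp
    obtain ⟨hy', hb'⟩ := Finset.mem_product.1 hp'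
    simp only at hy hb hy' hb' h
    have hyy : y = y' := by rw [← hfix b hb y hy, h, hfix b' hb' y' hy']
    subst hyy
    simpa using h

/-- If `B` acts trivially outside `M`, `|X| < D ^ k` and `k |M| ≤ n`, then some conjugate of `B`
satisfies `|X B^σ| ≥ |X| |B| / (D k)`. -/
theorem exists_card_mul_conj_of_fixing {n : ℕ} (X B : Finset (alternatingGroup (Fin n)))
    (M : Finset (Fin n)) (hM : 0 < M.card) (hM2 : M.card + 2 ≤ n)
    (hB : ∀ b ∈ B, ∀ i ∉ M, b.1 i = i) (D k : ℕ) (hk : k * M.card ≤ n) (hX : X.card < D ^ k) :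
    ∃ σ, X.card * B.card ≤ D * k * (X * conjFinset B σ).card := by
  obtain ⟨σ, hσ⟩ := Finite.exists_max fun σ => (X * conjFinset B σ).card
  refine ⟨σ, ?_⟩
  -- the blocks with labels `j < k` are disjoint intervals of length `|M|`
  set l : Fin n → ℕ := fun i => (i : ℕ) / M.card
  have hXc : (X.image fun x => (x.1 : Fin n → Fin n)).card = X.card :=
    Finset.card_image_of_injective _ fun x y h => Subtype.ext (Equiv.coe_fn_injective h)
  have h1 := card_le_mul_sum_forgetBlock l D k (X.image fun x => (x.1 : Fin n → Fin n))
    (by rwa [hXc])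
  rw [hXc] at h1
  calc X.card * B.card ≤ (D * ∑ j ∈ Finset.range k,
        ((X.image fun x => (x.1 : Fin n → Fin n)).image (forgetBlock l j)).card) * B.card :=
        Nat.mul_le_mul_right _ h1
    _ = D * ∑ j ∈ Finset.range k,
        ((X.image fun x => (x.1 : Fin n → Fin n)).image (forgetBlock l j)).card * B.card := by
        rw [mul_assoc, Finset.sum_mul]
    _ ≤ D * ∑ _j ∈ Finset.range k, (X * conjFinset B σ).card := by
        refine Nat.mul_le_mul_left _ (Finset.sum_le_sum fun j hj => ?_)
        have hjk : (j + 1) * M.card ≤ n :=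
          (Nat.mul_le_mul_right _ (Finset.mem_range.1 hj)).trans hk
        obtain ⟨τ, hτ⟩ := exists_even_perm_map M hM2 (fun i => l i = j) (card_block hM hjk)
        exact (card_forgetBlock_mul_le X B M hB l j τ hτ).trans (hσ τ)
    _ = D * k * (X * conjFinset B σ).card := by
        rw [Finset.sum_const, Finset.card_range, smul_eq_mul, mul_assoc]

/-! ### Separated subsets and large balls -/

/-- A maximal subset `B'` of `B` with quotients of support larger than `m` has the property that the
balls of radius `m` around its points cover `B`; `b₀` is the centre of a largest ball. -/
theorem exists_separated {n : ℕ} (B : Finset (alternatingGroup (Fin n))) (m : ℕ) :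
    ∃ B' ⊆ B, (∀ b ∈ B', ∀ b' ∈ B', b ≠ b' → m < (b * b'⁻¹).1.support.card) ∧
      ∃ b₀, B.card ≤ B'.card * (B.filter fun b => (b * b₀⁻¹).1.support.card ≤ m).card := by
  let sep : Finset (alternatingGroup (Fin n)) → Prop := fun B' =>
    ∀ b ∈ B', ∀ b' ∈ B', b ≠ b' → m < (b * b'⁻¹).1.support.card
  classical
  obtain ⟨B', hB', hmax⟩ := (B.powerset.filter sep).exists_max_image Finset.card
    ⟨∅, by simp [sep]⟩
  obtain ⟨hsub, hsep⟩ := Finset.mem_filter.1 hB'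
  rw [Finset.mem_powerset] at hsub
  refine ⟨B', hsub, hsep, ?_⟩
  obtain ⟨b₀, hb₀⟩ := Finite.exists_max fun b₀ : alternatingGroup (Fin n) =>
    (B.filter fun b => (b * b₀⁻¹).1.support.card ≤ m).card
  refine ⟨b₀, ?_⟩
  have hcover : B ⊆ B'.biUnion fun b' => B.filter fun b => (b * b'⁻¹).1.support.card ≤ m := by
    intro b hb
    by_contra hcon
    simp only [Finset.mem_biUnion, Finset.mem_filter, not_exists, not_and, not_le] at hcon
    have hbB' : b ∉ B' := fun h => by simpa using hcon b h hb
    have hins : insert b B' ∈ B.powerset.filter sep := by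
      refine Finset.mem_filter.2 ⟨Finset.mem_powerset.2 (Finset.insert_subset hb hsub), ?_⟩
      intro x hx y hy hxy
      rcases Finset.mem_insert.1 hx with rfl | hx'
      · rcases Finset.mem_insert.1 hy with rfl | hy'
        · exact absurd rfl hxy
        · exact hcon y hy' hb
      · rcases Finset.mem_insert.1 hy with rfl | hy'
        · have h1 := hcon x hx' hb
          have h2 : (x * y⁻¹).1 = ((y * x⁻¹).1)⁻¹ := by simp
          rwa [h2, Perm.support_inv]
        · exact hsep x hx' y hy' hxy
    have := hmax _ hins
    rw [Finset.card_insert_of_notMem hbB'] at this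
    omega
  calc B.card ≤ _ := Finset.card_le_card hcover
    _ ≤ _ := Finset.card_biUnion_le_card_mul _ _ _ fun c _ => hb₀ c

/-- Pigeonhole on the supports, of which there are at most `2 ^ n`, after translating the centre
`b₀` of the ball to the identity. -/
theorem exists_common_support {n : ℕ} (B : Finset (alternatingGroup (Fin n)))
    (b₀ : alternatingGroup (Fin n)) (m : ℕ) (hne : B.Nonempty)
    (hB : ∀ b ∈ B, (b * b₀⁻¹).1.support.card ≤ m) :
    ∃ (M : Finset (Fin n)) (B' : Finset (alternatingGroup (Fin n))), M.card ≤ m ∧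
      (∀ b ∈ B', b.1.support = M) ∧ B.card ≤ B'.card * 2 ^ n ∧ ∀ b ∈ B', b * b₀ ∈ B := by
  let f : alternatingGroup (Fin n) → Finset (Fin n) := fun b => (b * b₀⁻¹).1.support
  obtain ⟨c, hc, hmax⟩ := B.exists_max_image (fun c => (B.filter fun b => f b = f c).card) hne
  refine ⟨f c, (B.filter fun b => f b = f c).image (· * b₀⁻¹), hB c hc, ?_, ?_, ?_⟩
  · intro b hb
    obtain ⟨b', hb', rfl⟩ := Finset.mem_image.1 hb
    exact (Finset.mem_filter.1 hb').2
  · rw [Finset.card_image_of_injective _ (mul_left_injective _)]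
    have h1 := Finset.card_le_mul_card_image (f := f) B
      (B.filter fun b => f b = f c).card (by
        intro M hM
        obtain ⟨b, hb, rfl⟩ := Finset.mem_image.1 hM
        exact hmax b hb)
    refine h1.trans (Nat.mul_le_mul_left _ ?_)
    calc _ ≤ Fintype.card (Finset (Fin n)) := Finset.card_le_univ _
      _ = 2 ^ n := by simp
  · intro b hb
    obtain ⟨b', hb', rfl⟩ := Finset.mem_image.1 hb
    have h := (Finset.mem_filter.1 hb').1
    simpa using h

/-- A right translation of `B` only right translates the product `X B^σ`. -/
theorem card_mul_conj_translate_le {G : Type*} [Group G] [DecidableEq G] (X B B' : Finset G)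
    (b₀ σ : G) (h : ∀ b ∈ B', b * b₀ ∈ B) :
    (X * conjFinset B' σ).card ≤ (X * conjFinset B σ).card := by
  refine Finset.card_le_card_of_injOn (· * (σ⁻¹ * b₀ * σ)) ?_ (mul_left_injective _).injOn
  intro z hz
  obtain ⟨x, hx, y, hy, rfl⟩ := Finset.mem_mul.1 hz
  obtain ⟨b, hb, rfl⟩ := Finset.mem_image.1 hy
  refine Finset.mem_mul.2 ⟨x, hx, _, Finset.mem_image_of_mem _ (h b hb), ?_⟩
  group

theorem card_mul_conj_mono {G : Type*} [Group G] [DecidableEq G] (X : Finset G) {B B' : Finset G}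
    (σ : G) (h : B' ⊆ B) : (X * conjFinset B' σ).card ≤ (X * conjFinset B σ).card :=
  Finset.card_le_card (Finset.mul_subset_mul_left (Finset.image_subset_image h))

/-! ### The growth step -/

/-- The growth step when at least `e^{R/2}` elements of `B` lie in a ball of radius
`q / (4 log n)`. -/
theorem growth_of_near {n : ℕ} (X B : Finset (alternatingGroup (Fin n))) (q R : ℝ) (hn : 3 ≤ n)
    (hR : 100 * (n : ℝ) ≤ R) (hq : 0 < q) (hqn : q ≤ n * Real.log n)
    (hq2 : q ^ 2 = n * Real.log n * R) (hX : (X.card : ℝ) ≤ Real.exp (q / 32))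
    (b₀ : alternatingGroup (Fin n)) (hB : Real.exp (R / 2) ≤
      ((B.filter fun b => (b * b₀⁻¹).1.support.card ≤ ⌊q / (4 * Real.log n)⌋₊).card : ℝ)) :
    ∃ σ, (X.card : ℝ) * Real.exp (R / 32) ≤ (X * conjFinset B σ).card := by
  have hn3 : (3 : ℝ) ≤ n := by exact_mod_cast hn
  have hL : 0 < Real.log n := Real.log_pos (by linarith)
  have hR0 : 0 < R := by linarith
  set m := ⌊q / (4 * Real.log n)⌋₊
  set B₁ := B.filter fun b => (b * b₀⁻¹).1.support.card ≤ m
  have hB₁ : B₁.Nonempty := by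
    rw [← Finset.card_pos]
    exact_mod_cast (Real.exp_pos _).trans_le hB
  obtain ⟨M, B', hMm, hsupp, hcard, htrans⟩ := exists_common_support B₁ b₀ m hB₁
    fun b hb => (Finset.mem_filter.1 hb).2
  have hcard' : Real.exp (R / 2) ≤ B'.card * 2 ^ n := hB.trans (by exact_mod_cast hcard)
  have h2n : (2 : ℝ) ^ n ≤ Real.exp n := by
    rw [← Real.exp_one_pow]
    exact pow_le_pow_left₀ (by norm_num) (by linarith [Real.add_one_le_exp 1]) n
  -- a permutation with empty support is trivial, whereas `B'` has at least two elements
  have hM0 : 0 < M.card := by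
    by_contra! hM
    have hM' : M = ∅ := Finset.card_eq_zero.1 (Nat.le_zero.1 hM)
    have hB'1 : B'.card ≤ 1 := by
      refine Finset.card_le_one.2 fun a ha b hb => ?_
      have h1 := hsupp a ha
      have h2 := hsupp b hb
      rw [hM', Perm.support_eq_empty_iff] at h1 h2
      exact Subtype.ext (h1.trans h2.symm)
    have h3 : (B'.card : ℝ) * 2 ^ n ≤ 1 * Real.exp n :=
      mul_le_mul (by exact_mod_cast hB'1) h2n (by positivity) (by norm_num)
    rw [one_mul] at h3
    have := Real.exp_le_exp.1 (hcard'.trans h3)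
    linarith
  set s := M.card
  have hs : (s : ℝ) * (4 * Real.log n) ≤ q := by
    have h1 : (s : ℝ) ≤ q / (4 * Real.log n) :=
      (Nat.cast_le.2 hMm).trans (Nat.floor_le (by positivity))
    rwa [le_div_iff₀ (by positivity)] at h1
  have h4s : 4 * s ≤ n := by
    have : (s : ℝ) * 4 * Real.log n ≤ n * Real.log n := by linarith
    have := le_of_mul_le_mul_right this hL
    rw [mul_comm]
    exact_mod_cast this
  set k := n / s
  have hks : k * s ≤ n := Nat.div_mul_le_self n s
  have hkn : k ≤ n := Nat.div_le_self n s
  have hk2 : n ≤ 2 * k * s := by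
    have h1 : n < s * (k + 1) := Nat.lt_mul_div_succ n hM0
    have h2 : 1 ≤ k := (Nat.one_le_div_iff hM0).2 (by omega)
    nlinarith
  have hkq : 2 * n * Real.log n ≤ k * q := by
    have h1 : (n : ℝ) ≤ 2 * k * s := by exact_mod_cast hk2
    have h2 := mul_le_mul_of_nonneg_right h1 hL.le
    have h3 := mul_le_mul_of_nonneg_left hs (Nat.cast_nonneg (α := ℝ) k)
    linarith
  have hkR : q / 32 ≤ k * (R / 64) := by
    have h1 : q * (2 * q) ≤ q * (k * R) := by
      have := mul_le_mul_of_nonneg_right hkq hR0.le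
      nlinarith
    have := le_of_mul_le_mul_left h1 hq
    linarith
  -- `|X| ≤ e^{q/32} ≤ (e^{R/64})^k`, so this `D` satisfies `|X| < D ^ k`
  set D := ⌊Real.exp (R / 64)⌋₊ + 1
  have hD1 : Real.exp (R / 64) < D := by
    simp only [D]; push_cast; exact Nat.lt_floor_add_one _
  have hD2 : (D : ℝ) ≤ 2 * Real.exp (R / 64) := by
    have h1 : (⌊Real.exp (R / 64)⌋₊ : ℝ) ≤ Real.exp (R / 64) := Nat.floor_le (Real.exp_pos _).le
    have h2 : 1 ≤ Real.exp (R / 64) := Real.one_le_exp (by positivity)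
    simp only [D]; push_cast; linarith
  have hXD : X.card < D ^ k := by
    have hk0 : k ≠ 0 := (Nat.div_pos (by omega) hM0).ne'
    have h1 : (X.card : ℝ) < (D : ℝ) ^ k :=
      calc (X.card : ℝ) ≤ Real.exp (q / 32) := hX
        _ ≤ Real.exp (k * (R / 64)) := Real.exp_le_exp.2 hkR
        _ = Real.exp (R / 64) ^ k := Real.exp_nat_mul _ _
        _ < (D : ℝ) ^ k := pow_lt_pow_left₀ hD1 (Real.exp_pos _).le hk0
    exact_mod_cast h1
  obtain ⟨σ, hσ⟩ := exists_card_mul_conj_of_fixing X B' M hM0 (by omega)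
    (fun b hb i hi => by rwa [← hsupp b hb, Perm.notMem_support] at hi) D k hks hXD
  refine ⟨σ, le_trans ?_ (Nat.cast_le.2 (card_mul_conj_translate_le X B B' b₀ σ fun b hb =>
    Finset.filter_subset _ _ (htrans b hb)))⟩
  set N : ℝ := ((X * conjFinset B' σ).card : ℝ)
  have hN : (0 : ℝ) ≤ N := Nat.cast_nonneg _
  have hσ' : (X.card : ℝ) * B'.card ≤ D * k * N := by
    simp only [N]; exact_mod_cast hσ
  have hDk : (D : ℝ) * k * 2 ^ n ≤ Real.exp (R / 64 + 3 * n) := by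
    have h1 : (k : ℝ) ≤ Real.exp n :=
      (Nat.cast_le.2 hkn).trans (by linarith [Real.add_one_le_exp (n : ℝ)])
    have h2 : (2 : ℝ) ≤ Real.exp n := by linarith [Real.add_one_le_exp (n : ℝ)]
    calc (D : ℝ) * k * 2 ^ n ≤ (Real.exp n * Real.exp (R / 64)) * Real.exp n * Real.exp n := by
          have := hD2.trans (mul_le_mul_of_nonneg_right h2 (Real.exp_pos (R / 64)).le)
          gcongr
      _ = Real.exp (R / 64 + 3 * n) := by
          rw [← Real.exp_add, ← Real.exp_add, ← Real.exp_add]; ring_nf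
  refine le_of_mul_le_mul_right ?_ (Real.exp_pos (R / 64 + 3 * n))
  calc (X.card : ℝ) * Real.exp (R / 32) * Real.exp (R / 64 + 3 * n)
      = X.card * Real.exp (R / 32 + (R / 64 + 3 * n)) := by rw [mul_assoc, ← Real.exp_add]
    _ ≤ X.card * Real.exp (R / 2) := by
        refine mul_le_mul_of_nonneg_left (Real.exp_le_exp.2 ?_) (Nat.cast_nonneg _)
        linarith
    _ ≤ X.card * (B'.card * 2 ^ n) := mul_le_mul_of_nonneg_left hcard' (Nat.cast_nonneg _)
    _ = X.card * B'.card * 2 ^ n := by ring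
    _ ≤ D * k * N * 2 ^ n := mul_le_mul_of_nonneg_right hσ' (by positivity)
    _ = N * (D * k * 2 ^ n) := by ring
    _ ≤ N * Real.exp (R / 64 + 3 * n) := mul_le_mul_of_nonneg_left hDk hN

/-- The growth step when all quotients of distinct elements of `B` have support larger than
`q / (4 log n)`. -/
theorem growth_of_separated {n : ℕ} (X B : Finset (alternatingGroup (Fin n))) (q R : ℝ)
    (hn : 3 ≤ n) (hR : 100 * (n : ℝ) ≤ R) (hRq : R ≤ q)
    (hXne : X.Nonempty) (hX : (X.card : ℝ) ≤ Real.exp (q / 32))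
    (hsep : ∀ b ∈ B, ∀ b' ∈ B, b ≠ b' →
      ⌊q / (4 * Real.log n)⌋₊ < (b * b'⁻¹).1.support.card)
    (hB : Real.exp (R / 2) ≤ (B.card : ℝ)) :
    ∃ σ, (X.card : ℝ) * Real.exp (R / 32) ≤ (X * conjFinset B σ).card := by
  have hn3 : (3 : ℝ) ≤ n := by exact_mod_cast hn
  have hL : 0 < Real.log n := Real.log_pos (by linarith)
  set L := Real.log n
  have hexpL : Real.exp L = n := Real.exp_log (by linarith)
  have hZ : ∀ b ∈ B, ∀ b' ∈ B, b ≠ b' → ∀ v,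
      ((Finset.univ.filter fun σ : alternatingGroup (Fin n) => σ⁻¹ * (b * b'⁻¹) * σ = v).card : ℝ)
        ≤ Real.exp (n * L - q / 8) := by
    intro b hb b' hb' hne v
    have h1 := card_conjugators_sq_le (b * b'⁻¹) v
      (Finset.univ.filter fun σ => σ⁻¹ * (b * b'⁻¹) * σ = v)
      fun σ hσ => (Finset.mem_filter.1 hσ).2
    set z := (Finset.univ.filter fun σ : alternatingGroup (Fin n) =>
      σ⁻¹ * (b * b'⁻¹) * σ = v).card
    set s := (b * b'⁻¹).1.support.card
    have h2 : (z : ℝ) ^ 2 * (n : ℝ) ^ s ≤ (n : ℝ) ^ (2 * n) := by exact_mod_cast h1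
    have hs : q / 4 ≤ s * L := by
      have h3 := Nat.lt_of_floor_lt (hsep b hb b' hb' hne)
      rw [div_lt_iff₀ (by positivity)] at h3
      linarith
    rw [← hexpL, ← Real.exp_nat_mul, ← Real.exp_nat_mul] at h2
    refine le_of_sq_le_sq ?_ (Real.exp_pos _).le
    refine le_of_mul_le_mul_right (h2.trans ?_) (Real.exp_pos (s * L))
    rw [← Real.exp_nat_mul, ← Real.exp_add]
    refine Real.exp_le_exp.2 ?_
    push_cast
    linarith
  obtain ⟨σ, hσ⟩ := exists_mulEnergy_conj_le X B _ (Real.exp_pos _).le hZ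
  refine ⟨σ, ?_⟩
  -- Cauchy–Schwarz: `|X|² |B|² ≤ |X B^σ| E`
  have hCS := Finset.le_card_mul_mul_mulEnergy X (conjFinset B σ)
  rw [card_conjFinset] at hCS
  set N : ℝ := ((X * conjFinset B σ).card : ℝ)
  set E : ℝ := (Finset.mulEnergy X (conjFinset B σ) : ℝ)
  have hCS' : (X.card : ℝ) ^ 2 * (B.card : ℝ) ^ 2 ≤ N * E := by
    simp only [N, E]; exact_mod_cast hCS
  set g : ℝ := (Fintype.card (alternatingGroup (Fin n)) : ℝ)
  set x : ℝ := (X.card : ℝ)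
  set β : ℝ := (B.card : ℝ)
  set Z : ℝ := Real.exp (n * L - q / 8)
  have hx : 0 < x := by simp only [x]; exact_mod_cast hXne.card_pos
  have hβ : 0 < β := (Real.exp_pos _).trans_le hB
  -- `|Aₙ| = n! / 2` and `n! ≥ (n / e)ⁿ`
  have hg : Real.exp (n * L - n) ≤ 2 * g := by
    have h1 : 2 * g = (n.factorial : ℝ) := by
      have : Nontrivial (Fin n) := Fin.nontrivial_iff_two_le.2 (by omega)
      have := two_mul_card_alternatingGroup (α := Fin n)
      rw [Fintype.card_perm, Fintype.card_fin] at this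
      simp only [g]; exact_mod_cast this
    rw [h1, Real.exp_sub, Real.exp_nat_mul, hexpL, div_le_iff₀ (Real.exp_pos _), mul_comm]
    have := Real.pow_div_factorial_le_exp (n : ℝ) (by positivity) n
    rwa [div_le_iff₀ (by positivity)] at this
  have hg0 : 0 < g := by linarith [Real.exp_pos (n * L - n)]
  have he2 : (4 : ℝ) ≤ Real.exp n := by linarith [Real.add_one_le_exp (n : ℝ)]
  have hYβ : 2 * Real.exp (R / 32) ≤ β := by
    calc 2 * Real.exp (R / 32) ≤ Real.exp n * Real.exp (R / 32) := by
          have := Real.exp_pos (R / 32); nlinarith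
      _ ≤ Real.exp (R / 2) := by
          rw [← Real.exp_add]; exact Real.exp_le_exp.2 (by linarith)
      _ ≤ β := hB
  have hxYZ : 2 * (x * Real.exp (R / 32) * Z) ≤ g := by
    have h1 : x * Real.exp (R / 32) * Z ≤ Real.exp (n * L - q / 16) := by
      calc x * Real.exp (R / 32) * Z ≤ Real.exp (q / 32) * Real.exp (R / 32) * Z := by gcongr
        _ = Real.exp (q / 32 + R / 32 + (n * L - q / 8)) := by
            rw [← Real.exp_add, ← Real.exp_add]
        _ ≤ _ := Real.exp_le_exp.2 (by linarith)
    have h2 : 4 * Real.exp (n * L - q / 16) ≤ Real.exp (n * L - n) := by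
      calc 4 * Real.exp (n * L - q / 16) ≤ Real.exp n * Real.exp (n * L - q / 16) :=
            mul_le_mul_of_nonneg_right he2 (Real.exp_pos _).le
        _ = Real.exp (n + (n * L - q / 16)) := (Real.exp_add _ _).symm
        _ ≤ _ := Real.exp_le_exp.2 (by linarith)
    linarith
  by_contra! hlt
  set Y := Real.exp (R / 32)
  have hY : 0 < Y := Real.exp_pos _
  have hN : 0 ≤ N := Nat.cast_nonneg _
  have h1 : (x * β) * (g * (x * β)) ≤ (x * β) * (N * (g + x * β * Z)) := by
    calc (x * β) * (g * (x * β)) = g * (x ^ 2 * β ^ 2) := by ring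
      _ ≤ g * (N * E) := mul_le_mul_of_nonneg_left hCS' hg0.le
      _ = N * (g * E) := by ring
      _ ≤ N * (x * β * g + x ^ 2 * β ^ 2 * Z) := mul_le_mul_of_nonneg_left hσ hN
      _ = _ := by ring
  have h2 := le_of_mul_le_mul_left h1 (by positivity)
  have h3 : N * (g + x * β * Z) < x * Y * (g + x * β * Z) :=
    mul_lt_mul_of_pos_right hlt (by positivity)
  have h4 : x * Y * (g + x * β * Z) ≤ g * (x * β) := by
    have h5 : g * x * (2 * Y) ≤ g * x * β := mul_le_mul_of_nonneg_left hYβ (by positivity)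
    have h6 : x * β * (2 * (x * Y * Z)) ≤ x * β * g :=
      mul_le_mul_of_nonneg_left hxYZ (by positivity)
    linarith
  linarith

/-- The growth step: `X` grows by a factor `|B|^{1/32}` under multiplication by a suitable conjugate
of `B`, unless `X` is already larger than `e^{√(n log n R) / 32}`. -/
theorem exists_conj_growth {n : ℕ} (hn : 3 ≤ n) (X B : Finset (alternatingGroup (Fin n))) (R : ℝ)
    (hBR : (B.card : ℝ) = Real.exp R) (hR : 100 * (n : ℝ) ≤ R) (hXne : X.Nonempty)
    (hX : (X.card : ℝ) ≤ Real.exp (Real.sqrt (n * Real.log n * R) / 32)) :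
    ∃ σ, (X.card : ℝ) * Real.exp (R / 32) ≤ (X * conjFinset B σ).card := by
  have hn3 : (3 : ℝ) ≤ n := by exact_mod_cast hn
  have hL : 0 < Real.log n := Real.log_pos (by linarith)
  have hR0 : 0 < R := by linarith
  have hRn : R ≤ n * Real.log n := by
    have h1 : B.card ≤ n ^ n := by
      calc B.card ≤ Fintype.card (alternatingGroup (Fin n)) := Finset.card_le_univ _
        _ ≤ Fintype.card (Perm (Fin n)) := Fintype.card_subtype_le _
        _ = n.factorial := by rw [Fintype.card_perm, Fintype.card_fin]
        _ ≤ n ^ n := Nat.factorial_le_pow n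
    have h2 : Real.exp R ≤ (n : ℝ) ^ n := by rw [← hBR]; exact_mod_cast h1
    rw [← Real.log_pow]
    exact (Real.le_log_iff_exp_le (by positivity)).2 h2
  set q := Real.sqrt (n * Real.log n * R)
  have hq2 : q ^ 2 = n * Real.log n * R := Real.sq_sqrt (by positivity)
  have hq : 0 < q := Real.sqrt_pos.2 (by positivity)
  have hRq : R ≤ q := Real.le_sqrt_of_sq_le (by nlinarith)
  have hqn : q ≤ n * Real.log n := Real.sqrt_le_iff.2 ⟨by positivity, by nlinarith⟩
  obtain ⟨B', hsub, hsep, b₀, hprod⟩ := exists_separated B ⌊q / (4 * Real.log n)⌋₊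
  by_cases hB' : Real.exp (R / 2) ≤ (B'.card : ℝ)
  · obtain ⟨σ, hσ⟩ := growth_of_separated X B' q R hn hR hRq hXne hX hsep hB'
    exact ⟨σ, hσ.trans (Nat.cast_le.2 (card_mul_conj_mono X σ hsub))⟩
  · refine growth_of_near X B q R hn hR hq hqn hq2 hX b₀ ?_
    by_contra! hlt
    rw [not_le] at hB'
    have h1 : (B.card : ℝ) ≤ B'.card *
        (B.filter fun b => (b * b₀⁻¹).1.support.card ≤ ⌊q / (4 * Real.log n)⌋₊).card := by
      exact_mod_cast hprod
    have h2 := mul_lt_mul'' hB' hlt (Nat.cast_nonneg _) (Nat.cast_nonneg _)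
    rw [← Real.exp_add, add_halves, ← hBR] at h2
    linarith

theorem medium_sets_always_growing :
    ∃ (C c : ℝ) (n₀ : ℕ), C > 0 ∧ c > 0 ∧ 0 < n₀ ∧
      ∀ n : ℕ, n > n₀ → ∀ r : ℝ, r > C * (n : ℝ) →
        ∀ (i : ℕ), 0 < i →
          ∀ A : Fin i → Finset (alternatingGroup (Fin n)),
            (∀ j, ((A j).card : ℝ) ≥ Real.exp r) →
            ∃ σ : Fin i → alternatingGroup (Fin n),
              (((List.ofFn fun j => conjFinset (A j) (σ j)).prod).card : ℝ) ≥
                min (∏ j, ((A j).card : ℝ) ^ c)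
                  (Real.exp (c * Real.sqrt ((n : ℝ) * Real.log n * r))) := by
  refine ⟨100, 1 / 32, 2, by norm_num, by norm_num, by norm_num, ?_⟩
  intro n hn r hr i hi
  clear hi
  have hn' : (3 : ℝ) ≤ n := by exact_mod_cast hn
  have hL : 0 < Real.log n := Real.log_pos (by linarith)
  induction i with
  | zero => intro A _; exact ⟨fun j => j.elim0, by simp⟩
  | succ i ih =>
    intro A hA
    obtain ⟨σ, hσ⟩ := ih (fun j : Fin i => A j.castSucc) fun j : Fin i => hA j.castSucc
    set X := (List.ofFn fun j : Fin i => conjFinset (A j.castSucc) (σ j)).prod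
    set P : ℝ := ∏ j : Fin i, ((A j.castSucc).card : ℝ) ^ (1 / 32 : ℝ)
    set T : ℝ := Real.exp (1 / 32 * Real.sqrt ((n : ℝ) * Real.log n * r))
    have hpos : ∀ j, (0 : ℝ) < (A j).card := fun j => (Real.exp_pos r).trans_le (hA j)
    have hP : 0 < P := Finset.prod_pos fun j _ => Real.rpow_pos_of_pos (hpos _) _
    have hXne : X.Nonempty := by
      rw [← Finset.card_pos]
      exact_mod_cast (lt_min hP (Real.exp_pos _)).trans_le hσ
    suffices h : ∃ τ, min (P * ((A (Fin.last i)).card : ℝ) ^ (1 / 32 : ℝ)) T ≤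
        ((X * conjFinset (A (Fin.last i)) τ).card : ℝ) by
      obtain ⟨τ, hτ⟩ := h
      refine ⟨Fin.snoc (α := fun _ => alternatingGroup (Fin n)) σ τ, ?_⟩
      rw [List.ofFn_succ', List.concat_eq_append, List.prod_append, List.prod_singleton,
        Fin.prod_univ_castSucc]
      simpa only [Fin.snoc_castSucc, Fin.snoc_last] using hτ
    -- once the product has reached the threshold `T`, any further conjugate will do
    by_cases hXT : T ≤ (X.card : ℝ)
    · refine ⟨1, (min_le_right _ _).trans (hXT.trans (Nat.cast_le.2 ?_))⟩
      refine Finset.card_le_card_mul_right ?_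
      rw [← Finset.card_pos, card_conjFinset]
      exact_mod_cast hpos (Fin.last i)
    · rw [not_le] at hXT
      have hPX : P ≤ X.card := (min_le_iff.1 hσ).resolve_right (not_le.2 hXT)
      set R := Real.log (A (Fin.last i)).card
      have hBR : ((A (Fin.last i)).card : ℝ) = Real.exp R := (Real.exp_log (hpos _)).symm
      -- the growth step is applied with `R ≥ r`, which only raises its threshold
      have hrR : r ≤ R := by
        rw [← Real.exp_le_exp, ← hBR]; exact hA _
      obtain ⟨τ, hτ⟩ := exists_conj_growth hn X (A (Fin.last i)) R hBR (hr.le.trans hrR) hXne (by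
        refine hXT.le.trans (Real.exp_le_exp.2 ?_)
        have : Real.sqrt (n * Real.log n * r) ≤ Real.sqrt (n * Real.log n * R) :=
          Real.sqrt_le_sqrt (by gcongr)
        linarith)
      refine ⟨τ, (min_le_left _ _).trans (le_trans ?_ hτ)⟩
      rw [hBR, ← Real.exp_mul, mul_one_div]
      exact mul_le_mul_of_nonneg_right hPX (Real.exp_pos _).le
end

section
/- There exist absolute constants C > 0 and n₀ > 0 such that the following holds. Let n > n₀ and let A, B ⊆ Aₙ be nonempty subsets with |A| ≥ 2^{C·n·√(log n)}. Suppose |AσB| < (1/2)·|A|^{0.05}·|B| for all σ ∈ Aₙ. Then there exist a set I ⊆ {1,...,n} with |I| ≤ n − n/√(log n), an element b ∈ B, a real number r ∈ [0.2, 1), and a subset B' ⊆ b⁻¹B consisting of permutations that map I to I (i.e. B' ⊆ b⁻¹B ∩ (S_I × S_{{1,...,n}∖I})), such that, writing π for the map sending each element of S_I × S_{{1,...,n}∖I} to its restriction to I: |π(B')| ≥ |B| / (5^n · ((n−|I|)!)^r), and for every σ ∈ π(B'), |π⁻¹(σ) ∩ B'| ≥ ((n−|I|)!)^r. -/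
open scoped Pointwise Classical

/-!
Write `α = |A|^0.05` and let `c(x)` be the size of the conjugacy class of `x` in `Sₙ`.

*Energy.* By Cauchy–Schwarz, small products `AσD` force the multiplicative energy of `(Aσ, D)` to be
large for every `σ ∈ Aₙ`. A solution of `aσb = a'σb'` is a `σ` conjugating `bb'⁻¹` to `a⁻¹a'`, and
at most `n! / c(a⁻¹a')` permutations do so (`card_conj_mul_card_class_le`). Averaging over `σ`, and
discarding the few `x = a⁻¹a'` of small support (`card_small_support_le`), gives some `b ∈ D` and
some `x`, whose support size `m` satisfies `m! ≥ α^18`, such that `b⁻¹B` meets the class of `x` in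
at least `c(x) / (4α)` elements (`exists_good`). Since this applies to every `D ⊆ B` with
`|D| ≥ |B|/2`, at least half of the elements of `B` are such a `b`.

*Fibres.* A class of support size `m` has at least about `√(m!)` elements, up to a factor
exponential in `n` (`factorial_support_le`). Pigeonholing the support of `b⁻¹b₁` over subsets of
`Fin n` yields a set `I` with `n - |I| = m` such that at least `2 (m!)^0.2` elements `b₁ ∈ B` agree
with `b` on `I` (`exists_large_agree`).

*Assembly.* One more pigeonhole fixes `I`, the image `b(I)` and the dyadic size `2^k` of the fibre,
at the cost of a factor `4ⁿ n²`. Translating by one of the surviving `b` makes all of them preserve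
`I`, and `r` is determined by `(m!)^r = 2^k`; here `r < 1` because `m!` is not a power of two.
The bound `n/√(log n) ≤ m` comes from `α^18 ≤ m! ≤ n^m`.
-/

/-! ### Conjugacy classes and supports -/

/-- The permutations conjugating `y` to `x` are none or a coset of the centralizer of `x`, so there
are at most `n! / c(x)` of them. -/
lemma card_conj_mul_card_class_le {n : ℕ} (x y : Equiv.Perm (Fin n)) :
    (Finset.univ.filter fun σ : Equiv.Perm (Fin n) => σ * y * σ⁻¹ = x).card *
      (Finset.univ.filter fun h : Equiv.Perm (Fin n) => IsConj x h).card ≤ n.factorial := by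
  have hk : ∀ h : Equiv.Perm (Fin n), ∃ k : Equiv.Perm (Fin n), IsConj x h → k * x * k⁻¹ = h := by
    intro h
    by_cases hc : IsConj x h
    · obtain ⟨k, hk⟩ := isConj_iff.1 hc
      exact ⟨k, fun _ => hk⟩
    · exact ⟨1, fun h' => absurd h' hc⟩
  choose k hk using hk
  have hN : n.factorial = (Finset.univ : Finset (Equiv.Perm (Fin n))).card := by
    simp [Fintype.card_perm]
  rw [hN, ← Finset.card_product]
  refine Finset.card_le_card_of_injOn (fun p => k p.2 * p.1) (fun _ _ => Finset.mem_univ _) ?_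
  rintro ⟨σ, h⟩ h1 ⟨σ', h'⟩ h2 he
  simp only [Finset.coe_product, Finset.coe_filter, Finset.mem_univ, true_and, Set.mem_prod,
    Set.mem_ofPred_eq] at h1 h2 he
  -- `(σ, h) ↦ k h * σ` is injective: it conjugates `y` to `h`, which recovers `h` and then `σ`.
  have key : ∀ σ h : Equiv.Perm (Fin n), σ * y * σ⁻¹ = x → IsConj x h →
      (k h * σ) * y * (k h * σ)⁻¹ = h := by
    intro σ h hσ hh
    have : (k h * σ) * y * (k h * σ)⁻¹ = k h * (σ * y * σ⁻¹) * (k h)⁻¹ := by group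
    rw [this, hσ, hk h hh]
  have hh : h = h' := by
    rw [← key σ h h1.1 h1.2, ← key σ' h' h2.1 h2.2, he]
  subst hh
  simpa using he

/-- A class of support size `m` has at least `m! / (2ⁿ ⌊m/2⌋!)` elements: the product of the cycle
lengths is at most `2^m`, and there are at most `m/2` nontrivial cycles. -/
lemma factorial_support_le {n : ℕ} (x : Equiv.Perm (Fin n)) :
    x.support.card.factorial ≤
      (Finset.univ.filter fun h : Equiv.Perm (Fin n) => IsConj x h).card * 2 ^ n *
        (x.support.card / 2).factorial := by
  have h0 := Equiv.Perm.card_isConj_mul_eq x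
  have hm : x.support.card ≤ n := by simpa using Finset.card_le_univ x.support
  have hc : Nat.card {h : Equiv.Perm (Fin n) | IsConj x h} =
      (Finset.univ.filter fun h : Equiv.Perm (Fin n) => IsConj x h).card := by
    exact Nat.subtype_card _ (by simp)
  rw [hc, Equiv.Perm.sum_cycleType, Fintype.card_fin] at h0
  set c := (Finset.univ.filter fun h : Equiv.Perm (Fin n) => IsConj x h).card
  set m := x.support.card with hmdef
  have hprod : x.cycleType.prod ≤ 2 ^ n := by
    have h1 : ∀ s : Multiset ℕ, s.prod ≤ 2 ^ s.sum := by
      intro s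
      induction s using Multiset.induction with
      | empty => simp
      | cons a s ih =>
        rw [Multiset.prod_cons, Multiset.sum_cons, pow_add]
        exact Nat.mul_le_mul Nat.lt_two_pow_self.le ih
    refine (h1 _).trans ?_
    rw [Equiv.Perm.sum_cycleType]
    exact Nat.pow_le_pow_right (by norm_num) hm
  have hP : ∏ i ∈ x.cycleType.toFinset, (x.cycleType.count i).factorial ≤ (m / 2).factorial := by
    have h1 := Nat.le_of_dvd (Nat.factorial_pos _)
      (Nat.prod_factorial_dvd_factorial_sum x.cycleType.toFinset (fun i => x.cycleType.count i))
    refine h1.trans (Nat.factorial_le ?_)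
    rw [Multiset.toFinset_sum_count_eq]
    have h2 := Multiset.card_nsmul_le_sum
      (fun i (hi : i ∈ x.cycleType) => Equiv.Perm.two_le_of_mem_cycleType hi)
    rw [Equiv.Perm.sum_cycleType, smul_eq_mul] at h2
    omega
  have hn : (n - m).factorial * m.factorial ≤ n.factorial := by
    refine Nat.le_of_dvd (Nat.factorial_pos _) ?_
    simpa [mul_comm] using Nat.factorial_mul_factorial_dvd_factorial hm
  refine Nat.le_of_mul_le_mul_left ?_ (Nat.factorial_pos (n - m))
  calc (n - m).factorial * m.factorial ≤ n.factorial := hn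
    _ = c * ((n - m).factorial * x.cycleType.prod *
        ∏ i ∈ x.cycleType.toFinset, (x.cycleType.count i).factorial) := by rw [← h0]
    _ ≤ c * ((n - m).factorial * 2 ^ n * (m / 2).factorial) := by gcongr
    _ = _ := by ring

lemma card_agree_le {n : ℕ} (I : Finset (Fin n)) (τ : Equiv.Perm (Fin n)) :
    (Finset.univ.filter fun σ : Equiv.Perm (Fin n) => ∀ i ∈ I, σ i = τ i).card ≤
      (n - I.card).factorial := by
  have h1 : Fintype.card (Equiv.Perm {i // i ∉ I}) = (n - I.card).factorial := by
    rw [Fintype.card_perm]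
    congr 1
    rw [Fintype.card_subtype_compl]
    simp
  rw [← h1, Fintype.card_congr (Equiv.Perm.subtypeEquivSubtypePerm (fun i => i ∉ I)),
    Fintype.card_subtype]
  refine Finset.card_le_card_of_injOn (fun σ => τ⁻¹ * σ) ?_ ?_
  · intro σ hσ
    simp only [Finset.coe_filter, Finset.mem_univ, true_and, Set.mem_ofPred_eq, not_not] at hσ ⊢
    intro a ha
    simp [hσ a ha]
  · intro σ _ σ' _ h
    simpa using h

lemma card_small_support_le {n : ℕ} (K : ℝ) (hK : 0 ≤ K) :
    ((Finset.univ.filter fun x : Equiv.Perm (Fin n) =>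
      (x.support.card.factorial : ℝ) < K).card : ℝ) ≤ 2 ^ n * K := by
  have hsub : (Finset.univ.filter fun x : Equiv.Perm (Fin n) =>
      (x.support.card.factorial : ℝ) < K) ⊆
      (Finset.univ.filter fun S : Finset (Fin n) => (S.card.factorial : ℝ) < K).biUnion
        fun S => Finset.univ.filter fun σ : Equiv.Perm (Fin n) =>
          ∀ i ∈ Sᶜ, σ i = (1 : Equiv.Perm (Fin n)) i := by
    intro x hx
    simp only [Finset.mem_filter, Finset.mem_univ, true_and, Finset.mem_biUnion] at hx ⊢
    exact ⟨x.support, hx, fun i hi => by simpa using hi⟩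
  have h1 := (Finset.card_le_card hsub).trans Finset.card_biUnion_le
  have h2 : ((Finset.univ.filter fun x : Equiv.Perm (Fin n) =>
      (x.support.card.factorial : ℝ) < K).card : ℝ) ≤
      ∑ S ∈ Finset.univ.filter (fun S : Finset (Fin n) => (S.card.factorial : ℝ) < K), K := by
    refine le_trans (Nat.cast_le.2 h1) ?_
    push_cast
    refine Finset.sum_le_sum fun S hS => ?_
    have h3 := card_agree_le Sᶜ (1 : Equiv.Perm (Fin n))
    have h4 : n - Sᶜ.card = S.card := by
      have := Finset.card_le_univ S
      rw [Fintype.card_fin] at this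
      rw [Finset.card_compl, Fintype.card_fin]
      omega
    rw [h4] at h3
    exact le_trans (by exact_mod_cast h3) (Finset.mem_filter.1 hS).2.le
  refine h2.trans ?_
  rw [Finset.sum_const, nsmul_eq_mul]
  gcongr
  have := Finset.card_le_univ
    (Finset.univ.filter (fun S : Finset (Fin n) => (S.card.factorial : ℝ) < K))
  simp only [Fintype.card_finset, Fintype.card_fin] at this
  exact_mod_cast this

/-! ### Averaging the energy over `σ` -/

/-- The number of pairs `(b, σ)` with `b ∈ B` and `σ` conjugating `bb'⁻¹` to `x`, bounded through the
class of `x`; note that `bb'⁻¹` and `b'⁻¹b` are conjugate. -/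
lemma sum_card_conj_mul_le {n : ℕ} (B : Finset (Equiv.Perm (Fin n))) (x b' : Equiv.Perm (Fin n)) :
    (∑ b ∈ B, (Finset.univ.filter fun σ : Equiv.Perm (Fin n) =>
        σ * (b * b'⁻¹) * σ⁻¹ = x).card) *
      (Finset.univ.filter fun h : Equiv.Perm (Fin n) => IsConj x h).card ≤
      (B.filter fun b => IsConj x (b'⁻¹ * b)).card * n.factorial := by
  rw [Finset.sum_mul, Finset.card_filter (fun b => IsConj x (b'⁻¹ * b)) B, Finset.sum_mul]
  refine Finset.sum_le_sum fun b _ => ?_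
  split_ifs with h
  · rw [one_mul]
    exact card_conj_mul_card_class_le x (b * b'⁻¹)
  · rw [Finset.filter_eq_empty_iff.2]
    · simp
    · intro σ _ hσ
      refine h (isConj_iff.2 ⟨b'⁻¹ * σ⁻¹, ?_⟩)
      rw [← hσ]
      group

lemma mulEnergy_translate_le {n : ℕ} (A B : Finset (Equiv.Perm (Fin n)))
    (σ : Equiv.Perm (Fin n)) :
    Finset.mulEnergy (A * {σ}) B ≤
      (((A ×ˢ A) ×ˢ (B ×ˢ B)).filter fun q =>
        σ * (q.2.1 * q.2.2⁻¹) * σ⁻¹ = q.1.1⁻¹ * q.1.2).card := by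
  unfold Finset.mulEnergy
  refine Finset.card_le_card_of_injOn
    (fun q => ((q.1.1 * σ⁻¹, q.1.2 * σ⁻¹), (q.2.1, q.2.2))) ?_ ?_
  · rintro ⟨⟨a, a'⟩, b, b'⟩ h
    simp only [Finset.coe_filter, Finset.mem_product, Finset.mem_mul, Finset.mem_singleton,
      exists_eq_left, Set.mem_ofPred_eq] at h ⊢
    obtain ⟨⟨⟨⟨u, hu, rfl⟩, u', hu', rfl⟩, hb, hb'⟩, he⟩ := h
    refine ⟨⟨⟨by simpa using hu, by simpa using hu'⟩, hb, hb'⟩, ?_⟩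
    have h2 : σ * b = u⁻¹ * (u' * σ * b') := by rw [← he]; group
    calc σ * (b * b'⁻¹) * σ⁻¹ = (σ * b) * b'⁻¹ * σ⁻¹ := by group
      _ = _ := by rw [h2]; group
  · rintro ⟨⟨a, a'⟩, b, b'⟩ _ ⟨⟨a1, a1'⟩, b1, b1'⟩ _ h
    simpa using h

lemma sum_mulEnergy_translate_le {n : ℕ} (A D S : Finset (Equiv.Perm (Fin n))) :
    ∑ σ ∈ S, (Finset.mulEnergy (A * {σ}) D) ≤
      ∑ b' ∈ D, ∑ a ∈ A, ∑ a' ∈ A, ∑ b ∈ D,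
        (Finset.univ.filter fun σ : Equiv.Perm (Fin n) =>
          σ * (b * b'⁻¹) * σ⁻¹ = a⁻¹ * a').card := by
  refine (Finset.sum_le_sum fun σ _ => mulEnergy_translate_le A D σ).trans
    ((Finset.sum_le_sum_of_subset (Finset.subset_univ S)).trans (le_of_eq ?_))
  have h1 : ∀ (Q : Finset ((Equiv.Perm (Fin n) × Equiv.Perm (Fin n)) ×
        (Equiv.Perm (Fin n) × Equiv.Perm (Fin n))))
      (P : Equiv.Perm (Fin n) → ((Equiv.Perm (Fin n) × Equiv.Perm (Fin n)) ×
        (Equiv.Perm (Fin n) × Equiv.Perm (Fin n))) → Prop) [∀ σ q, Decidable (P σ q)],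
      ∑ σ : Equiv.Perm (Fin n), (Q.filter fun q => P σ q).card =
        ∑ q ∈ Q, (Finset.univ.filter fun σ => P σ q).card := by
    intro Q P _
    simp only [Finset.card_filter]
    rw [Finset.sum_comm]
  refine (h1 _ fun σ q => σ * (q.2.1 * q.2.2⁻¹) * σ⁻¹ = q.1.1⁻¹ * q.1.2).trans ?_
  rw [Finset.sum_product_right, Finset.sum_product_right]
  simp only [Finset.sum_product]
  refine Finset.sum_congr rfl fun b' _ => ?_
  rw [Finset.sum_comm]
  refine Finset.sum_congr rfl fun a _ => ?_
  rw [Finset.sum_comm]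

/-- If `AσD` is small for all even `σ`, then for some `b ∈ D` the translate `b⁻¹B` has density at
least `1 / (4α)` in the conjugacy class of some `x` of large support. -/
lemma exists_good {n : ℕ} (hn : 2 ≤ n) (A B D : Finset (Equiv.Perm (Fin n))) (hD : D ⊆ B)
    (hDne : D.Nonempty) (α : ℝ) (hα : 8 * 2 ^ n ≤ α) (hA : (A.card : ℝ) = α ^ 20)
    (hgrow : ∀ σ ∈ alternatingGroup (Fin n),
      ((A * ({σ} : Finset (Equiv.Perm (Fin n))) * D).card : ℝ) ≤ α * D.card) :
    ∃ b ∈ D, ∃ x : Equiv.Perm (Fin n), α ^ 18 ≤ (x.support.card.factorial : ℝ) ∧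
      ((Finset.univ.filter fun h : Equiv.Perm (Fin n) => IsConj x h).card : ℝ) ≤
        4 * α * ((B.filter fun b1 => IsConj x (b⁻¹ * b1)).card : ℝ) := by
  by_contra! hbad
  have hα0 : 0 < α := lt_of_lt_of_le (by positivity) hα
  have hDpos : (0 : ℝ) < D.card := by exact_mod_cast hDne.card_pos
  set N : ℝ := (n.factorial : ℝ) with hN
  have hNpos : 0 < N := by positivity
  set W : Equiv.Perm (Fin n) → Equiv.Perm (Fin n) → ℕ := fun x y =>
    (Finset.univ.filter fun σ : Equiv.Perm (Fin n) => σ * y * σ⁻¹ = x).card with hW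
  set Alt : Finset (Equiv.Perm (Fin n)) :=
    Finset.univ.filter fun σ => σ ∈ alternatingGroup (Fin n) with hAlt
  have hAltcard : (Alt.card : ℝ) = N / 2 := by
    have : Nontrivial (Fin n) := Fin.nontrivial_iff_two_le.2 hn
    have h1 := two_mul_nat_card_alternatingGroup (α := Fin n)
    have h2 : Nat.card (alternatingGroup (Fin n)) = Alt.card :=
      Nat.subtype_card _ (by simp [hAlt])
    rw [h2, Nat.card_perm, Nat.card_fin] at h1
    have : (2 : ℝ) * Alt.card = N := by rw [hN]; exact_mod_cast h1
    linarith
  -- Cauchy–Schwarz turns small products into large energy.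
  have hlow : ∀ σ ∈ Alt, (A.card : ℝ) ^ 2 * D.card ≤ α * Finset.mulEnergy (A * {σ}) D := by
    intro σ hσ
    have h1 := Finset.le_card_mul_mul_mulEnergy (A * {σ}) D
    have h2 : (A * ({σ} : Finset (Equiv.Perm (Fin n)))).card = A.card := by
      exact Finset.card_mul_singleton _ _
    rw [h2] at h1
    have h3 : (A.card : ℝ) ^ 2 * (D.card : ℝ) ^ 2 ≤
        (A * ({σ} : Finset (Equiv.Perm (Fin n))) * D).card * Finset.mulEnergy (A * {σ}) D := by
      exact_mod_cast h1
    have h4 := hgrow σ (by simpa [hAlt] using hσ)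
    have h5 : (A.card : ℝ) ^ 2 * (D.card : ℝ) ^ 2 ≤
        α * D.card * Finset.mulEnergy (A * {σ}) D :=
      h3.trans (mul_le_mul_of_nonneg_right h4 (by positivity))
    refine le_of_mul_le_mul_right ?_ hDpos
    linarith
  have hsum := sum_mulEnergy_translate_le A D Alt
  have hw : ∀ b' ∈ D, ∀ x : Equiv.Perm (Fin n),
      ((∑ b ∈ D, W x (b * b'⁻¹) : ℕ) : ℝ) ≤
        N / (4 * α) + if (x.support.card.factorial : ℝ) < α ^ 18 then N else 0 := by
    intro b' hb' x
    have h1 := sum_card_conj_mul_le D x b'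
    set c : ℕ := (Finset.univ.filter fun h : Equiv.Perm (Fin n) => IsConj x h).card with hc
    have hcpos : (0 : ℝ) < c := by
      have : 0 < c := Finset.card_pos.2 ⟨x, Finset.mem_filter.2 ⟨Finset.mem_univ _, IsConj.refl x⟩⟩
      exact_mod_cast this
    have h2 : ((∑ b ∈ D, W x (b * b'⁻¹) : ℕ) : ℝ) * c ≤
        (D.filter fun b => IsConj x (b'⁻¹ * b)).card * N := by
      rw [hN]; exact_mod_cast h1
    refine le_of_mul_le_mul_right (h2.trans ?_) hcpos
    split_ifs with hx
    -- Small support: bound the number of conjugates in `b'⁻¹D` by the whole class.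
    · have h3 : (D.filter fun b => IsConj x (b'⁻¹ * b)).card ≤ c := by
        refine Finset.card_le_card_of_injOn (fun b => b'⁻¹ * b) ?_ ?_
        · intro b hb
          simpa using (Finset.mem_filter.1 hb).2
        · intro b _ b1 _ h
          simpa using h
      have h3' : ((D.filter fun b => IsConj x (b'⁻¹ * b)).card : ℝ) ≤ c := by exact_mod_cast h3
      have h4 : 0 ≤ N / (4 * α) * c := by positivity
      nlinarith
    -- Large support: the assumed failure of the conclusion at `b'` applies.
    · have h3 := hbad b' hb' x (not_lt.1 hx)
      have h4 : ((D.filter fun b => IsConj x (b'⁻¹ * b)).card : ℝ) ≤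
          ((B.filter fun b => IsConj x (b'⁻¹ * b)).card : ℝ) := by
        exact_mod_cast Finset.card_le_card (Finset.filter_subset_filter _ hD)
      have h5 : ((D.filter fun b => IsConj x (b'⁻¹ * b)).card : ℝ) ≤ c / (4 * α) := by
        rw [le_div_iff₀ (by positivity)]
        nlinarith
      calc _ ≤ c / (4 * α) * N := by gcongr
        _ = _ := by ring
  have hA' : ∀ b' ∈ D, ∀ a ∈ A,
      ((∑ a' ∈ A, ∑ b ∈ D, W (a⁻¹ * a') (b * b'⁻¹) : ℕ) : ℝ) ≤
        A.card * (N / (4 * α)) + 2 ^ n * α ^ 18 * N := by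
    intro b' hb' a ha
    rw [Nat.cast_sum]
    refine (Finset.sum_le_sum fun a' _ => hw b' hb' (a⁻¹ * a')).trans ?_
    rw [Finset.sum_add_distrib, Finset.sum_const, nsmul_eq_mul, ← Finset.sum_filter,
      Finset.sum_const, nsmul_eq_mul]
    gcongr
    refine le_trans ?_ (card_small_support_le (n := n) (α ^ 18) (by positivity))
    norm_cast
    refine Finset.card_le_card_of_injOn (fun a' => a⁻¹ * a') ?_ ?_
    · intro a' ha'
      simpa using (Finset.mem_filter.1 ha').2
    · intro b _ b1 _ h
      simpa using h
  have hup : ((∑ σ ∈ Alt, (Finset.mulEnergy (A * {σ}) D) : ℕ) : ℝ) ≤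
      D.card * (A.card * (A.card * (N / (4 * α)) + 2 ^ n * α ^ 18 * N)) := by
    refine (Nat.cast_le.2 hsum).trans ?_
    rw [Nat.cast_sum, ← nsmul_eq_mul]
    refine Finset.sum_le_card_nsmul _ _ _ fun b' hb' => ?_
    rw [Nat.cast_sum, ← nsmul_eq_mul]
    exact Finset.sum_le_card_nsmul _ _ _ fun a ha => hA' b' hb' a ha
  have hlow' : N / 2 * ((A.card : ℝ) ^ 2 * D.card) ≤
      α * ((∑ σ ∈ Alt, (Finset.mulEnergy (A * {σ}) D) : ℕ) : ℝ) := by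
    rw [← hAltcard, ← nsmul_eq_mul, Nat.cast_sum, Finset.mul_sum]
    exact Finset.card_nsmul_le_sum _ _ _ hlow
  have hfin := hlow'.trans (mul_le_mul_of_nonneg_left hup hα0.le)
  rw [hA] at hfin
  have e1 : α * (D.card * (α ^ 20 * (α ^ 20 * (N / (4 * α)) + 2 ^ n * α ^ 18 * N))) =
      D.card * N * α ^ 39 * (α / 4 + 2 ^ n) := by
    field_simp
  have e2 : N / 2 * ((α ^ 20) ^ 2 * (D.card : ℝ)) = D.card * N * α ^ 39 * (α / 2) := by ring
  rw [e1, e2] at hfin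
  have h6 := le_of_mul_le_mul_left hfin (by positivity)
  have h7 : (0 : ℝ) < 2 ^ n := by positivity
  linarith

/-! ### From dense classes to large fibres -/

/-- If `b⁻¹B` is dense in a class of large support, then many elements of `B` agree with `b` on a
common set `I`, namely the complement of the most popular support. -/
lemma exists_large_agree {n : ℕ} (B : Finset (Equiv.Perm (Fin n))) (b x : Equiv.Perm (Fin n))
    (α : ℝ) (hα : 8 * 4 ^ n ≤ α) (hx : α ^ 18 ≤ (x.support.card.factorial : ℝ))
    (hc : ((Finset.univ.filter fun h : Equiv.Perm (Fin n) => IsConj x h).card : ℝ) ≤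
        4 * α * ((B.filter fun b1 => IsConj x (b⁻¹ * b1)).card : ℝ)) :
    ∃ I : Finset (Fin n), α ^ 18 ≤ ((n - I.card).factorial : ℝ) ∧
      2 * ((n - I.card).factorial : ℝ) ^ (0.2 : ℝ) ≤
        ((B.filter fun b1 => ∀ i ∈ I, b1 i = b i).card : ℝ) := by
  have h4 : (1 : ℝ) ≤ 4 ^ n := one_le_pow₀ (by norm_num)
  have hα1 : 1 ≤ α := by linarith
  set m := x.support.card with hm
  have hmn : m ≤ n := by simpa using Finset.card_le_univ x.support
  set M : ℝ := (m.factorial : ℝ) with hM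
  have hM1 : 1 ≤ M := by rw [hM]; exact_mod_cast m.factorial_pos
  have hM0 : 0 < M := by linarith
  set c : ℕ := (Finset.univ.filter fun h : Equiv.Perm (Fin n) => IsConj x h).card with hcdef
  set T := B.filter fun b1 => IsConj x (b⁻¹ * b1) with hT
  have hhalf : ((m / 2).factorial : ℝ) ≤ M ^ (1 / 2 : ℝ) := by
    rw [← Real.sqrt_eq_rpow]
    refine Real.le_sqrt_of_sq_le ?_
    have h1 : (m / 2).factorial * (m / 2).factorial ≤ m.factorial :=
      (Nat.le_of_dvd (Nat.factorial_pos _)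
        (Nat.factorial_mul_factorial_dvd_factorial_add _ _)).trans
        (Nat.factorial_le (by omega))
    rw [sq, hM]
    exact_mod_cast h1
  have hclow : M ^ (1 / 2 : ℝ) ≤ c * 2 ^ n := by
    have h1 : M ≤ c * 2 ^ n * ((m / 2).factorial : ℝ) := by
      have := factorial_support_le x
      rw [hM]
      exact_mod_cast this
    have h2 : M ^ (1 / 2 : ℝ) * M ^ (1 / 2 : ℝ) = M := by
      rw [← Real.rpow_add hM0]; norm_num
    have h3 : 0 < M ^ (1 / 2 : ℝ) := by positivity
    refine le_of_mul_le_mul_right ?_ h3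
    rw [h2]
    exact h1.trans (by gcongr)
  have hsplit : M ^ (1 / 2 : ℝ) = M ^ (0.2 : ℝ) * M ^ (3 / 10 : ℝ) := by
    rw [← Real.rpow_add hM0]; norm_num
  -- `M^(3/10)` must absorb `4α · 4ⁿ` and a factor `2`; their product is at most `α²`.
  have hM3 : α ^ 2 ≤ M ^ (3 / 10 : ℝ) := by
    have h1 : (α ^ 18) ^ (1 / 9 : ℝ) = α ^ 2 := by
      rw [← Real.rpow_natCast, ← Real.rpow_natCast, ← Real.rpow_mul (by linarith)]
      norm_num
    rw [← h1]
    calc (α ^ 18) ^ (1 / 9 : ℝ) ≤ M ^ (1 / 9 : ℝ) :=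
          Real.rpow_le_rpow (by positivity) hx (by norm_num)
      _ ≤ _ := Real.rpow_le_rpow_of_exponent_le hM1 (by norm_num)
  have hTlow : 2 * M ^ (0.2 : ℝ) * 2 ^ n ≤ T.card := by
    have h44 : (4 : ℝ) ^ n = 2 ^ n * 2 ^ n := by rw [← mul_pow]; norm_num
    have hr : 0 < M ^ (0.2 : ℝ) := by positivity
    have h2 : (0 : ℝ) < 2 ^ n := by positivity
    have h5 : M ^ (0.2 : ℝ) * (8 * 4 ^ n * α) ≤ 4 * α * T.card * 2 ^ n := by
      calc M ^ (0.2 : ℝ) * (8 * 4 ^ n * α) ≤ M ^ (0.2 : ℝ) * M ^ (3 / 10 : ℝ) := by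
            gcongr
            refine le_trans ?_ hM3
            rw [sq]
            gcongr
        _ = M ^ (1 / 2 : ℝ) := hsplit.symm
        _ ≤ c * 2 ^ n := hclow
        _ ≤ _ := by gcongr
    rw [h44] at h5
    refine le_of_mul_le_mul_right (a := 4 * α * 2 ^ n) ?_ (by positivity)
    linarith
  have hTpos : (0 : ℝ) < T.card := lt_of_lt_of_le (by positivity) hTlow
  obtain ⟨I, -, hI⟩ := Finset.exists_le_card_fiber_of_nsmul_le_card_of_maps_to
    (s := T) (t := (Finset.univ : Finset (Finset (Fin n))))
    (f := fun b1 => (b⁻¹ * b1).supportᶜ) (b := (2 * M ^ (0.2 : ℝ) : ℝ))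
    (fun _ _ => Finset.mem_univ _) ⟨∅, Finset.mem_univ _⟩ (by
      rw [nsmul_eq_mul, Finset.card_univ, Fintype.card_finset, Fintype.card_fin]
      push_cast
      linarith)
  have hfpos : (0 : ℝ) < (T.filter fun b1 => (b⁻¹ * b1).supportᶜ = I).card :=
    lt_of_lt_of_le (by positivity) hI
  obtain ⟨b1, hb1⟩ := Finset.card_pos.1 (by exact_mod_cast hfpos)
  have hcard : n - I.card = m := by
    obtain ⟨hb1T, hb1I⟩ := Finset.mem_filter.1 hb1
    have h1 := Equiv.Perm.isConj_iff_cycleType_eq.1 (Finset.mem_filter.1 hb1T).2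
    have h2 : (b⁻¹ * b1).support.card = m := by
      rw [← Equiv.Perm.sum_cycleType, ← h1, Equiv.Perm.sum_cycleType]
    rw [← hb1I, Finset.card_compl, h2, Fintype.card_fin]
    omega
  refine ⟨I, by rw [hcard]; exact hx, ?_⟩
  rw [hcard]
  refine hI.trans ?_
  norm_cast
  refine Finset.card_le_card fun b2 hb2 => ?_
  obtain ⟨hb2T, hb2I⟩ := Finset.mem_filter.1 hb2
  refine Finset.mem_filter.2 ⟨(Finset.mem_filter.1 hb2T).1, fun i hi => ?_⟩
  rw [← hb2I] at hi
  have h1 : (b⁻¹ * b2) i = i := by simpa using hi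
  rw [Equiv.Perm.mul_apply, Equiv.Perm.inv_eq_iff_eq] at h1
  exact h1

/-- Given elements `b ∈ G ⊆ B` with a common image `J = b(I)` and fibres over `I` of size between `2^k`
and `2^(k+1)`, the union of these fibres translated by one `b₀⁻¹` preserves `I`, and its restrictions
to `I` number at least `|G| / 2^(k+1)`. -/
lemma assemble {n : ℕ} (B G : Finset (Equiv.Perm (Fin n))) (hG : G ⊆ B) (I J : Finset (Fin n))
    (k : ℕ) (hJ : ∀ b ∈ G, I.image b = J)
    (hlo : ∀ b ∈ G, 2 ^ k ≤ (B.filter fun b1 => ∀ i ∈ I, b1 i = b i).card)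
    (hhi : ∀ b ∈ G, (B.filter fun b1 => ∀ i ∈ I, b1 i = b i).card ≤ 2 ^ (k + 1))
    (b₀ : Equiv.Perm (Fin n)) (hb₀ : b₀ ∈ G) :
    ∃ B' : Finset (Equiv.Perm (Fin n)), B' ⊆ B.image (fun x => b₀⁻¹ * x) ∧
      (∀ τ ∈ B', ∀ i ∈ I, τ i ∈ I) ∧
      G.card ≤ 2 ^ (k + 1) *
        (B'.image (fun τ => fun i : {x // x ∈ I} => τ (i : Fin n))).card ∧
      (∀ g ∈ B'.image (fun τ => fun i : {x // x ∈ I} => τ (i : Fin n)),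
        2 ^ k ≤ (B'.filter (fun τ => (fun i : {x // x ∈ I} => τ (i : Fin n)) = g)).card) := by
  set U := B.filter fun b1 => ∃ b ∈ G, ∀ i ∈ I, b1 i = b i with hU
  refine ⟨U.image fun x => b₀⁻¹ * x, Finset.image_subset_image (Finset.filter_subset _ _),
    ?_, ?_, ?_⟩
  · intro τ hτ i hi
    obtain ⟨b1, hb1, rfl⟩ := Finset.mem_image.1 hτ
    obtain ⟨-, b, hb, hag⟩ := Finset.mem_filter.1 hb1
    have h1 : b i ∈ I.image b₀ := by
      rw [hJ b₀ hb₀, ← hJ b hb]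
      exact Finset.mem_image_of_mem _ hi
    obtain ⟨j, hj, hjb⟩ := Finset.mem_image.1 h1
    have h2 : (b₀⁻¹ * b1) i = j := by
      rw [Equiv.Perm.mul_apply, Equiv.Perm.inv_eq_iff_eq, hag i hi, hjb]
    exact h2 ▸ hj
  · set F : Equiv.Perm (Fin n) → ({x // x ∈ I} → Fin n) :=
      fun b => fun i => (b₀⁻¹ * b) (i : Fin n) with hF
    have h1 : G.card ≤ 2 ^ (k + 1) * (G.image F).card := by
      refine Finset.card_le_mul_card_image _ _ fun g hg => ?_
      obtain ⟨b, hb, rfl⟩ := Finset.mem_image.1 hg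
      refine le_trans (Finset.card_le_card fun b1 hb1 => ?_) (hhi b hb)
      obtain ⟨hb1G, hb1F⟩ := Finset.mem_filter.1 hb1
      refine Finset.mem_filter.2 ⟨hG hb1G, fun i hi => ?_⟩
      have := congrFun hb1F ⟨i, hi⟩
      simpa [hF] using this
    refine h1.trans (Nat.mul_le_mul_left _ (Finset.card_le_card fun g hg => ?_))
    obtain ⟨b, hb, rfl⟩ := Finset.mem_image.1 hg
    refine Finset.mem_image.2 ⟨b₀⁻¹ * b, Finset.mem_image.2 ⟨b, ?_, rfl⟩, rfl⟩
    exact Finset.mem_filter.2 ⟨hG hb, b, hb, fun _ _ => rfl⟩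
  · intro g hg
    obtain ⟨τ, hτ, rfl⟩ := Finset.mem_image.1 hg
    obtain ⟨b1, hb1, rfl⟩ := Finset.mem_image.1 hτ
    obtain ⟨-, b, hb, hag⟩ := Finset.mem_filter.1 hb1
    refine (hlo b hb).trans ?_
    refine Finset.card_le_card_of_injOn (fun b2 => b₀⁻¹ * b2) ?_ ?_
    · intro b2 hb2
      obtain ⟨hb2B, hb2I⟩ := Finset.mem_filter.1 hb2
      refine Finset.mem_filter.2 ⟨Finset.mem_image.2 ⟨b2, ?_, rfl⟩, ?_⟩
      · exact Finset.mem_filter.2 ⟨hb2B, b, hb, hb2I⟩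
      · funext i
        simp [hb2I i i.2, hag i i.2]
    · intro b2 _ b3 _ h
      simpa using h

lemma card_fiber_bound {n : ℕ} (B : Finset (Equiv.Perm (Fin n))) (b : Equiv.Perm (Fin n))
    (I : Finset (Fin n)) :
    (B.filter fun b1 => ∀ i ∈ I, b1 i = b i).card ≤ (n - I.card).factorial :=
  (Finset.card_le_card (Finset.filter_subset_filter _ (Finset.subset_univ B))).trans
    (card_agree_le I b)

lemma four_mul_sq_mul_le {n : ℕ} (hn : 50 ≤ n) : 4 * n ^ 2 * 4 ^ n ≤ 5 ^ n := by
  induction n, hn using Nat.le_induction with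
  | base => norm_num
  | succ n hn ih =>
    have h1 : 4 * (n + 1) ^ 2 ≤ 5 * n ^ 2 := by nlinarith
    calc 4 * (n + 1) ^ 2 * 4 ^ (n + 1) = 4 * (4 * (n + 1) ^ 2) * 4 ^ n := by ring
      _ ≤ 4 * (5 * n ^ 2) * 4 ^ n := by gcongr
      _ = 5 * (4 * n ^ 2 * 4 ^ n) := by ring
      _ ≤ 5 * 5 ^ n := by gcongr
      _ = 5 ^ (n + 1) := by ring

/-! ### Pigeonholing over sets, images and dyadic sizes -/

/-- The conclusion of the theorem with `2^k` in place of `(m!)^r`, and with the size of `I` controlled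
only through `m! ≥ α^18`, where `m = n - |I|`. -/
lemma exists_structure {n : ℕ} (hn : 50 ≤ n) (A B : Finset (Equiv.Perm (Fin n)))
    (hBne : B.Nonempty) (α : ℝ) (hα : 8 * 4 ^ n ≤ α) (hA : (A.card : ℝ) = α ^ 20)
    (hgrow : ∀ σ ∈ alternatingGroup (Fin n),
      ((A * ({σ} : Finset (Equiv.Perm (Fin n))) * B).card : ℝ) < 1 / 2 * α * B.card) :
    ∃ (I : Finset (Fin n)) (b : Equiv.Perm (Fin n)) (k : ℕ) (B' : Finset (Equiv.Perm (Fin n))),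
      α ^ 18 ≤ ((n - I.card).factorial : ℝ) ∧ b ∈ B ∧
      ((n - I.card).factorial : ℝ) ^ (0.2 : ℝ) ≤ 2 ^ k ∧ 2 ^ k ≤ (n - I.card).factorial ∧
      B' ⊆ B.image (fun x => b⁻¹ * x) ∧ (∀ τ ∈ B', ∀ i ∈ I, τ i ∈ I) ∧
      (B.card : ℝ) ≤ 5 ^ n * 2 ^ k *
        (B'.image (fun τ => fun i : {x // x ∈ I} => τ (i : Fin n))).card ∧
      (∀ g ∈ B'.image (fun τ => fun i : {x // x ∈ I} => τ (i : Fin n)),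
        2 ^ k ≤ (B'.filter (fun τ => (fun i : {x // x ∈ I} => τ (i : Fin n)) = g)).card) := by
  have hα0 : 0 < α := lt_of_lt_of_le (by positivity) hα
  have h24 : (2 : ℝ) ^ n ≤ 4 ^ n := by gcongr; norm_num
  set P : Equiv.Perm (Fin n) → Finset (Fin n) → Prop := fun b I =>
    α ^ 18 ≤ ((n - I.card).factorial : ℝ) ∧
      2 * ((n - I.card).factorial : ℝ) ^ (0.2 : ℝ) ≤
        ((B.filter fun b1 => ∀ i ∈ I, b1 i = b i).card : ℝ) with hP
  set G := B.filter fun b => ∃ I, P b I with hG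
  set D := B.filter fun b => ¬ ∃ I, P b I with hD
  have hBpos : (0 : ℝ) < B.card := by exact_mod_cast hBne.card_pos
  have hGD : (G.card : ℝ) + D.card = B.card := by
    exact_mod_cast Finset.card_filter_add_card_filter_not (s := B) (fun b => ∃ I, P b I)
  -- The complement `D` of `G` cannot contain half of `B`, or it would contain a good element.
  have hGcard : (B.card : ℝ) / 2 ≤ G.card := by
    by_contra! hlt
    have hDlow : (B.card : ℝ) / 2 ≤ D.card := by linarith
    have hDne : D.Nonempty := by
      rw [← Finset.card_pos]
      have : (0 : ℝ) < D.card := by linarith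
      exact_mod_cast this
    obtain ⟨b, hb, x, hx, hc⟩ := exists_good (by omega) A B D (Finset.filter_subset _ _) hDne α
      (by linarith) hA (fun σ hσ => by
        have h1 : ((A * {σ} * D).card : ℝ) ≤ (A * {σ} * B).card := by
          exact_mod_cast Finset.card_le_card
            (Finset.mul_subset_mul_left (Finset.filter_subset _ _))
        have h2 := hgrow σ hσ
        nlinarith)
    exact (Finset.mem_filter.1 hb).2 (exists_large_agree B b x α hα hx hc)
  have hI : ∀ b : Equiv.Perm (Fin n), ∃ I, b ∈ G → P b I := by
    intro b
    by_cases hb : b ∈ G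
    · obtain ⟨I, hI⟩ := (Finset.mem_filter.1 hb).2
      exact ⟨I, fun _ => hI⟩
    · exact ⟨∅, fun h => absurd h hb⟩
  choose I hI using hI
  have hfact : ∀ m ≤ n, m.factorial < 2 ^ (n ^ 2) := by
    intro m hm
    calc m.factorial ≤ n.factorial := Nat.factorial_le hm
      _ ≤ n ^ n := Nat.factorial_le_pow n
      _ < (2 ^ n) ^ n := Nat.pow_lt_pow_left Nat.lt_two_pow_self (by omega)
      _ = _ := by rw [← pow_mul, sq]
  set f : Equiv.Perm (Fin n) → ℕ := fun b =>
    (B.filter fun b1 => ∀ i ∈ I b, b1 i = b i).card with hf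
  have hfpos : ∀ b ∈ G, f b ≠ 0 := by
    intro b hb
    exact (Finset.card_pos.2 ⟨b, Finset.mem_filter.2
      ⟨(Finset.mem_filter.1 hb).1, fun _ _ => rfl⟩⟩).ne'
  have hnpos : (0 : ℝ) < n := by exact_mod_cast (by omega : 0 < n)
  obtain ⟨⟨I₀, J, k⟩, -, hfib⟩ := Finset.exists_le_card_fiber_of_nsmul_le_card_of_maps_to
    (s := G) (t := (Finset.univ : Finset (Finset (Fin n))) ×ˢ
      ((Finset.univ : Finset (Finset (Fin n))) ×ˢ Finset.range (n ^ 2)))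
    (f := fun b => (I b, (I b).image b, Nat.log 2 (f b)))
    (b := (B.card / (2 * n ^ 2 * 4 ^ n) : ℝ))
    (fun b hb => by
      simp only [Finset.mem_product, Finset.mem_univ, true_and, Finset.mem_range]
      exact Nat.log_lt_of_lt_pow (hfpos b hb)
        ((card_fiber_bound B b (I b)).trans_lt (hfact _ (Nat.sub_le _ _))))
    ⟨(∅, ∅, 0), by
      simp only [Finset.mem_product, Finset.mem_univ, true_and, Finset.mem_range]
      exact Nat.pow_pos (by omega)⟩ (by
      rw [nsmul_eq_mul, Finset.card_product, Finset.card_product, Finset.card_univ,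
        Fintype.card_finset, Fintype.card_fin, Finset.card_range]
      push_cast
      refine le_trans (le_of_eq ?_) hGcard
      have h44 : (4 : ℝ) ^ n = 2 ^ n * 2 ^ n := by rw [← mul_pow]; norm_num
      rw [h44]
      field_simp)
  set G' := G.filter fun b => (I b, (I b).image b, Nat.log 2 (f b)) = (I₀, J, k) with hG'
  have hG'pos : (0 : ℝ) < G'.card := lt_of_lt_of_le (by positivity) hfib
  obtain ⟨b₀, hb₀⟩ := Finset.card_pos.1 (by exact_mod_cast hG'pos)
  have hdata : ∀ b ∈ G', b ∈ G ∧ I b = I₀ ∧ I₀.image b = J ∧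
      Nat.log 2 (B.filter fun b1 => ∀ i ∈ I₀, b1 i = b i).card = k := by
    intro b hb
    obtain ⟨h1, h2⟩ := Finset.mem_filter.1 hb
    simp only [Prod.mk.injEq] at h2
    obtain ⟨h3, h4, h5⟩ := h2
    refine ⟨h1, h3, by rw [← h3]; exact h4, ?_⟩
    rw [← h3]
    exact h5
  have hlo : ∀ b ∈ G', 2 ^ k ≤ (B.filter fun b1 => ∀ i ∈ I₀, b1 i = b i).card := by
    intro b hb
    obtain ⟨h1, h2, -, h4⟩ := hdata b hb
    rw [← h4]
    refine Nat.pow_log_le_self 2 ?_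
    rw [← h2]
    exact hfpos b h1
  have hhi : ∀ b ∈ G', (B.filter fun b1 => ∀ i ∈ I₀, b1 i = b i).card < 2 ^ (k + 1) := by
    intro b hb
    obtain ⟨-, -, -, h4⟩ := hdata b hb
    rw [← h4]
    exact Nat.lt_pow_succ_log_self (by norm_num) _
  have hG'B : G' ⊆ B := (Finset.filter_subset _ _).trans (Finset.filter_subset _ _)
  obtain ⟨B', h1, h2, h3, h4⟩ := assemble B G' hG'B I₀ J k (fun b hb => (hdata b hb).2.2.1) hlo
    (fun b hb => (hhi b hb).le) b₀ hb₀
  obtain ⟨hP1, hP2⟩ := hI b₀ (hdata b₀ hb₀).1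
  rw [(hdata b₀ hb₀).2.1] at hP1 hP2
  refine ⟨I₀, b₀, k, B', hP1, hG'B hb₀, ?_, (hlo b₀ hb₀).trans (card_fiber_bound B b₀ I₀),
    h1, h2, ?_, h4⟩
  · have h5 : ((B.filter fun b1 => ∀ i ∈ I₀, b1 i = b₀ i).card : ℝ) ≤ 2 ^ (k + 1) := by
      exact_mod_cast (hhi b₀ hb₀).le
    rw [pow_succ] at h5
    linarith
  · set p : ℝ := ((B'.image (fun τ => fun i : {x // x ∈ I₀} => τ (i : Fin n))).card : ℝ)
      with hp
    have h5 : (G'.card : ℝ) ≤ 2 ^ (k + 1) * p := by rw [hp]; exact_mod_cast h3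
    have h6 : (B.card : ℝ) ≤ 2 ^ (k + 1) * p * (2 * n ^ 2 * 4 ^ n) := by
      rw [← div_le_iff₀ (by positivity)]
      exact hfib.trans h5
    have h7 : (4 * n ^ 2 * 4 ^ n : ℝ) ≤ 5 ^ n := by exact_mod_cast four_mul_sq_mul_le hn
    calc (B.card : ℝ) ≤ 2 ^ (k + 1) * p * (2 * n ^ 2 * 4 ^ n) := h6
      _ = (4 * n ^ 2 * 4 ^ n) * 2 ^ k * p := by ring
      _ ≤ _ := by gcongr

lemma two_pow_ne_factorial {m k : ℕ} (hm : 3 ≤ m) : 2 ^ k ≠ m.factorial := by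
  intro h
  have h1 : 3 ∣ 2 ^ k := h ▸ (Nat.prime_three.dvd_factorial.2 hm)
  have h2 := Nat.prime_three.dvd_of_dvd_pow h1
  omega

theorem simplified_growth_or_covering :
    ∃ (C : ℝ) (n₀ : ℕ), C > 0 ∧ 0 < n₀ ∧
      ∀ n : ℕ, n > n₀ →
        ∀ A B : Finset (Equiv.Perm (Fin n)),
          (∀ x ∈ A, x ∈ alternatingGroup (Fin n)) → (∀ x ∈ B, x ∈ alternatingGroup (Fin n)) →
          A.Nonempty → B.Nonempty →
          (A.card : ℝ) ≥ 2 ^ (C * (n : ℝ) * Real.sqrt (Real.log n)) →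
          (∀ σ ∈ alternatingGroup (Fin n),
            ((A * ({σ} : Finset (Equiv.Perm (Fin n))) * B).card : ℝ) <
              (1 / 2) * (A.card : ℝ) ^ (0.05 : ℝ) * (B.card : ℝ)) →
          ∃ (I : Finset (Fin n)) (b : Equiv.Perm (Fin n)) (r : ℝ)
            (B' : Finset (Equiv.Perm (Fin n))),
            (I.card : ℝ) ≤ (n : ℝ) - (n : ℝ) / Real.sqrt (Real.log n) ∧
            b ∈ B ∧ r ∈ Set.Ico (0.2 : ℝ) 1 ∧
            B' ⊆ B.image (fun x => b⁻¹ * x) ∧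
            (∀ τ ∈ B', ∀ i ∈ I, τ i ∈ I) ∧
            (((B'.image (fun τ => fun i : {x // x ∈ I} => τ (i : Fin n))).card : ℝ) ≥
              (B.card : ℝ) / ((5 : ℝ) ^ (n : ℕ) * (((n - I.card).factorial : ℝ)) ^ r)) ∧
            (∀ g ∈ B'.image (fun τ => fun i : {x // x ∈ I} => τ (i : Fin n)),
              ((B'.filter (fun τ => (fun i : {x // x ∈ I} => τ (i : Fin n)) = g)).card : ℝ) ≥
                (((n - I.card).factorial : ℝ)) ^ r) := by
  refine ⟨1000, 50, by norm_num, by norm_num, ?_⟩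
  intro n hn A B _ _ hAne hBne hAcard hgrow
  have hnR : (50 : ℝ) < n := by exact_mod_cast hn
  have hlog : 1 ≤ Real.log n := by
    rw [Real.le_log_iff_exp_le (by linarith)]
    linarith [Real.exp_one_lt_d9]
  set L := Real.sqrt (Real.log n) with hL
  have hL1 : 1 ≤ L := Real.one_le_sqrt.2 hlog
  have hLsq : L * L = Real.log n := Real.mul_self_sqrt (by linarith)
  have hA0 : (0 : ℝ) < A.card := by exact_mod_cast hAne.card_pos
  set α : ℝ := (A.card : ℝ) ^ (0.05 : ℝ) with hα
  have hA20 : (A.card : ℝ) = α ^ 20 := by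
    rw [hα, ← Real.rpow_natCast, ← Real.rpow_mul hA0.le]
    norm_num
  have hαlow : (2 : ℝ) ^ (50 * n * L) ≤ α := by
    have h1 : ((2 : ℝ) ^ (1000 * n * L)) ^ (0.05 : ℝ) ≤ α :=
      Real.rpow_le_rpow (by positivity) hAcard (by norm_num)
    rw [← Real.rpow_mul (by norm_num)] at h1
    convert h1 using 2
    ring
  have hα84 : 8 * 4 ^ n ≤ α := by
    have h1 : (8 : ℝ) * 4 ^ n = 2 ^ ((3 + 2 * n : ℕ) : ℝ) := by
      rw [Real.rpow_natCast, pow_add, pow_mul]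
      norm_num
    rw [h1]
    refine le_trans (Real.rpow_le_rpow_of_exponent_le (by norm_num) ?_) hαlow
    push_cast
    nlinarith
  obtain ⟨I, b, k, B', h18, hb, hlow, hup, hsub, hmap, hcard, hfib⟩ :=
    exists_structure hn.le A B hBne α hα84 hA20 hgrow
  have hIn : I.card ≤ n := by simpa using Finset.card_le_univ I
  set m := n - I.card with hm
  have hα0 : 0 < α := lt_of_lt_of_le (by positivity) hα84
  have hm3 : 3 ≤ m := by
    by_contra! hlt
    have h1 : m.factorial ≤ 2 := by
      simpa using Nat.factorial_le (show m ≤ 2 by omega)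
    have h2 : (m.factorial : ℝ) ≤ 2 := by exact_mod_cast h1
    have h3 : (1 : ℝ) ≤ 4 ^ n := one_le_pow₀ (by norm_num)
    have h4 : α ≤ α ^ 18 := le_self_pow₀ (by linarith) (by norm_num)
    linarith
  have hMpos : (0 : ℝ) < m.factorial := by positivity
  have hM1 : (1 : ℝ) < m.factorial := by
    have : 1 < m.factorial := Nat.one_lt_factorial.2 (by omega)
    exact_mod_cast this
  have hmlow : (n : ℝ) / L ≤ m := by
    have h1 : Real.log ((2 : ℝ) ^ (50 * n * L)) ≤ Real.log α :=
      Real.log_le_log (by positivity) hαlow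
    rw [Real.log_rpow (by norm_num)] at h1
    have h2 : 18 * Real.log α ≤ Real.log (m.factorial : ℝ) := by
      have := Real.log_le_log (pow_pos hα0 18) h18
      rwa [Real.log_pow] at this
    have h3 : Real.log (m.factorial : ℝ) ≤ m * Real.log n := by
      rw [← Real.log_pow]
      refine Real.log_le_log hMpos ?_
      have : m.factorial ≤ n ^ m :=
        (Nat.factorial_le_pow m).trans (Nat.pow_le_pow_left (Nat.sub_le _ _) m)
      exact_mod_cast this
    have h4 := Real.log_two_gt_d9
    have h5 : n * L ≤ m * L * L := by
      have h6 : 0 < n * L := by positivity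
      rw [mul_assoc, hLsq]
      nlinarith
    rw [div_le_iff₀ (by linarith)]
    exact le_of_mul_le_mul_right h5 (by linarith)
  set r := Real.logb (m.factorial : ℝ) (2 ^ k) with hr
  have hrpow : (m.factorial : ℝ) ^ r = 2 ^ k :=
    Real.rpow_logb hMpos hM1.ne' (by positivity)
  refine ⟨I, b, r, B', ?_, hb, ⟨?_, ?_⟩, hsub, hmap, ?_, ?_⟩
  · have : (m : ℝ) = n - I.card := by rw [hm, Nat.cast_sub hIn]
    linarith
  · rw [hr, Real.le_logb_iff_rpow_le hM1 (by positivity)]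
    exact hlow
  · rw [hr, Real.logb_lt_iff_lt_rpow hM1 (by positivity), Real.rpow_one]
    exact_mod_cast lt_of_le_of_ne hup (two_pow_ne_factorial hm3)
  · rw [hrpow, ge_iff_le, div_le_iff₀ (by positivity)]
    linarith
  · intro g hg
    rw [hrpow]
    exact_mod_cast hfib g hg
end
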